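/- For every n ≥ 4, the orbit space C_n(ℂ)/(ℂ⋊ℂ*) is not a topological manifold: the point p given by the class of the configuration of the n roots of the polynomial z^n + 1 admits no open neighborhood homeomorphic to an open subset of ℝ^m for any m ∈ ℕ. In the paper's notation, M_{0,n+1}/Σ_n is not a topological manifold for n ≥ 4. -/

import Mathlib

open Complex Topology

/-- Ordered configuration space of `n` points in the subset `X ⊆ ℂ`. -/
abbrev OrdConfig (n : ℕ) (X : Set ℂ) : Type :=
  {f : Fin n → ℂ // Function.Injective f ∧ ∀ i, f i ∈ X}

/-- Two ordered configurations are related if they differ by a permutation of labels. -/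
def permRel (n : ℕ) (X : Set ℂ) (f g : OrdConfig n X) : Prop :=
  ∃ σ : Equiv.Perm (Fin n), g.1 = f.1 ∘ σ

/-- The unordered configuration space `C_n(X)` with the quotient topology. -/
abbrev UConfig (n : ℕ) (X : Set ℂ) : Type := Quot (permRel n X)

/-- The affine group relation on unordered configurations: `d` is obtained from `c` by
applying `z ↦ b z + a` with `b ≠ 0` to every point. -/
def affRel (n : ℕ) (c d : UConfig n Set.univ) : Prop :=
  ∃ a b : ℂ, b ≠ 0 ∧ ∃ f g : OrdConfig n Set.univ,
    Quot.mk _ f = c ∧ Quot.mk _ g = d ∧ ∀ i, g.1 i = b * f.1 i + a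

/-- `C_n(ℂ)/(ℂ⋊ℂ*)`, the orbit space with the quotient topology. -/
abbrev ConfigModAff (n : ℕ) : Type := Quot (affRel n)



namespace CMA

/-! ### Part 1: cubical chains and the slicing operators -/

abbrev Cell := List (ℤ × Bool)
abbrev Ch := Cell →₀ ℤ

noncomputable def consL (x : ℤ × Bool) : Ch →ₗ[ℤ] Ch := Finsupp.lmapDomain ℤ ℤ (fun c => x :: c)

@[simp] lemma consL_single (x : ℤ × Bool) (c : Cell) (k : ℤ) :
    consL x (Finsupp.single c k) = Finsupp.single (x :: c) k := by
  simp [consL]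

noncomputable def bdc : Cell → Ch
  | [] => 0
  | (v, false) :: c => consL (v, false) (bdc c)
  | (v, true) :: c =>
      Finsupp.single ((v + 1, false) :: c) 1 - Finsupp.single ((v, false) :: c) 1
        - consL (v, true) (bdc c)

noncomputable def bd : Ch →ₗ[ℤ] Ch := Finsupp.linearCombination ℤ bdc

@[simp] lemma bd_single (c : Cell) : bd (Finsupp.single c 1) = bdc c := by
  simp [bd]

lemma ch_ext {R : Type*} [AddCommGroup R] {f g : Ch →ₗ[ℤ] R}
    (h : ∀ c, f (Finsupp.single c 1) = g (Finsupp.single c 1)) (x : Ch) : f x = g x := by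
  have : f = g := Finsupp.lhom_ext' fun c => LinearMap.ext_ring (h c)
  rw [this]

lemma bd_cons_false (v : ℤ) (x : Ch) : bd (consL (v, false) x) = consL (v, false) (bd x) :=
  ch_ext (f := bd ∘ₗ consL (v, false)) (g := consL (v, false) ∘ₗ bd) (by intro c; simp [bdc]) x

lemma bd_cons_true (v : ℤ) (x : Ch) : bd (consL (v, true) x) =
    consL (v + 1, false) x - consL (v, false) x - consL (v, true) (bd x) :=
  ch_ext (f := bd ∘ₗ consL (v, true))
    (g := consL (v + 1, false) - consL (v, false) - consL (v, true) ∘ₗ bd)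
    (by intro c; simp [bdc]) x

lemma bd_bdc : ∀ c : Cell, bd (bdc c) = 0
  | [] => by simp [bdc]
  | (v, false) :: c => by simp [bdc, bd_cons_false, bd_bdc c]
  | (v, true) :: c => by
      simp [bdc, bd_cons_true, bd_bdc c]

lemma bd_bd (x : Ch) : bd (bd x) = 0 :=
  ch_ext (f := bd ∘ₗ bd) (g := 0) (by intro c; simp [bd_bdc]) x

def base (c : Cell) : List ℤ := c.map Prod.fst
def top (c : Cell) : List ℤ := c.map (fun x => if x.2 then x.1 + 1 else x.1)

open Classical in
noncomputable def prj (p : List ℤ → Prop) : Ch →ₗ[ℤ] Ch :=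
  Finsupp.linearCombination ℤ (fun c => if p (base c) then Finsupp.single c 1 else 0)

open Classical in
@[simp] lemma prj_single (p : List ℤ → Prop) (c : Cell) :
    prj p (Finsupp.single c 1) = if p (base c) then Finsupp.single c 1 else 0 := by
  simp [prj]

lemma prj_cons (p : List ℤ → Prop) (x : ℤ × Bool) (c : Ch) :
    prj p (consL x c) = consL x (prj (fun l => p (x.1 :: l)) c) :=
  ch_ext (f := prj p ∘ₗ consL x) (g := consL x ∘ₗ prj (fun l => p (x.1 :: l)))
    (by intro c; by_cases h : p (x.1 :: base c) <;> simp [base] at h ⊢ <;> simp [h]) c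

lemma prj_true (c : Ch) (p : List ℤ → Prop) (h : ∀ l, p l) : prj p c = c :=
  ch_ext (f := prj p) (g := LinearMap.id) (by intro c; simp [h]) c

lemma prj_false (c : Ch) (p : List ℤ → Prop) (h : ∀ l, ¬ p l) : prj p c = 0 :=
  ch_ext (f := prj p) (g := 0) (by intro c; simp [h]) c

noncomputable def sl (p : List ℤ → Prop) : Ch →ₗ[ℤ] Ch := bd ∘ₗ prj p - prj p ∘ₗ bd

lemma sl_apply (p : List ℤ → Prop) (x : Ch) : sl p x = bd (prj p x) - prj p (bd x) := rfl

lemma bd_sl (p : List ℤ → Prop) (x : Ch) : bd (sl p x) = - sl p (bd x) := by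
  simp [sl_apply, bd_bd]

noncomputable def sit : (ℕ → List ℤ → Prop) → ℕ → Ch → Ch
  | _, 0, c => c
  | p, s + 1, c => sit (fun i => p (i + 1)) s (sl (p 0) c)

lemma sit_neg : ∀ (s : ℕ) (p : ℕ → List ℤ → Prop) (c : Ch), sit p s (-c) = - sit p s c
  | 0, _, _ => rfl
  | s + 1, p, c => by simp [sit, sit_neg s]

lemma bd_sit : ∀ (s : ℕ) (p : ℕ → List ℤ → Prop) (c : Ch),
    bd (sit p s c) = (-1 : ℤ) ^ s • sit p s (bd c)
  | 0, _, _ => by simp [sit]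
  | s + 1, p, c => by simp [sit, bd_sit s, bd_sl, sit_neg, pow_succ]

/-- faces relation -/
def fc1 (x y : ℤ × Bool) : Prop := x = y ∨ (y.2 = true ∧ x.2 = false ∧ (x.1 = y.1 ∨ x.1 = y.1 + 1))

def fc (c d : Cell) : Prop := List.Forall₂ fc1 c d

lemma fc1_refl (x) : fc1 x x := Or.inl rfl

lemma fc_refl : ∀ c, fc c c
  | [] => .nil
  | _ :: c => .cons (fc1_refl _) (fc_refl c)

lemma fc1_trans {x y z} (h : fc1 x y) (h' : fc1 y z) : fc1 x z := by
  unfold fc1 at *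
  rcases h with rfl | ⟨h1, h2, h3⟩
  · exact h'
  · rcases h' with rfl | ⟨h4, h5, h6⟩
    · exact Or.inr ⟨h1, h2, h3⟩
    · rw [h5] at h1; cases h1

lemma fc_trans : ∀ {a b c : Cell}, fc a b → fc b c → fc a c
  | _, _, _, .nil, .nil => .nil
  | _, _, _, .cons h1 h2, .cons h3 h4 => .cons (fc1_trans h1 h3) (fc_trans h2 h4)

abbrev sup (Q : Cell → Prop) : Submodule ℤ Ch := Finsupp.supported ℤ ℤ {c | Q c}

lemma single_mem_sup {Q : Cell → Prop} {c : Cell} (h : Q c) (k : ℤ) :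
    Finsupp.single c k ∈ sup Q := Finsupp.single_mem_supported ℤ k h

lemma map_sup {R : Type*} [AddCommGroup R] {Q : Cell → Prop} (f : Ch →ₗ[ℤ] R) (T : Submodule ℤ R)
    (h : ∀ c, Q c → f (Finsupp.single c 1) ∈ T) {x : Ch} (hx : x ∈ sup Q) : f x ∈ T := by
  have : sup Q ≤ T.comap f := by
    unfold sup
    rw [Finsupp.supported_eq_span_single]
    rw [Submodule.span_le]
    rintro _ ⟨c, hc, rfl⟩
    exact h c hc
  exact this hx

lemma sup_mono {Q Q' : Cell → Prop} (h : ∀ c, Q c → Q' c) {x : Ch} (hx : x ∈ sup Q) :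
    x ∈ sup Q' := Finsupp.supported_mono h hx

lemma cons_sup {Q Q' : Cell → Prop} (y) (h : ∀ c, Q c → Q' (y :: c)) {x : Ch} (hx : x ∈ sup Q) :
    consL y x ∈ sup Q' :=
  map_sup (consL y) (sup Q') (fun c hc => by simpa using single_mem_sup (h c hc) 1) hx

lemma bdc_sup : ∀ c : Cell, bdc c ∈ sup (fun d => fc d c)
  | [] => by simp [bdc]
  | (v, false) :: c => by
      simp only [bdc]
      exact cons_sup _ (fun d hd => .cons (fc1_refl _) hd) (bdc_sup c)
  | (v, true) :: c => by
      simp only [bdc]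
      refine sub_mem (sub_mem (single_mem_sup ?_ _) (single_mem_sup ?_ _)) 
        (cons_sup _ (fun d hd => .cons (fc1_refl _) hd) (bdc_sup c))
      · exact .cons (Or.inr (by simp)) (fc_refl c)
      · exact .cons (Or.inr (by simp)) (fc_refl c)

lemma prj_sup (p) {Q : Cell → Prop} {x : Ch} (hx : x ∈ sup Q) :
    prj p x ∈ sup (fun c => Q c ∧ p (base c)) := by
  refine map_sup (prj p) _ (fun c hc => ?_) hx
  by_cases h : p (base c)
  · simpa [h] using single_mem_sup (Q := fun c => Q c ∧ p (base c)) ⟨hc, h⟩ 1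
  · simp [h]

lemma sub_prj_sup (p) {Q : Cell → Prop} {x : Ch} (hx : x ∈ sup Q) :
    x - prj p x ∈ sup (fun c => Q c ∧ ¬ p (base c)) := by
  refine map_sup (LinearMap.id - prj p) _ (fun c hc => ?_) hx
  by_cases h : p (base c)
  · simp [h]
  · simpa [h] using single_mem_sup (Q := fun c => Q c ∧ ¬ p (base c)) ⟨hc, h⟩ 1

lemma sl_single_sup (p : List ℤ → Prop) (c : Cell) :
    sl p (Finsupp.single c 1) ∈ sup (fun d => fc d c ∧ ¬ (p (base d) ↔ p (base c))) := by
  by_cases h : p (base c)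
  · have := sub_prj_sup p (bdc_sup c)
    simp only [sl_apply, prj_single, h, if_true, bd_single]
    exact sup_mono (fun d hd => ⟨hd.1, by simp [hd.2]⟩) this
  · have := prj_sup p (bdc_sup c)
    simp only [sl_apply, prj_single, h, if_false, bd_single, map_zero, zero_sub]
    exact neg_mem (sup_mono (fun d hd => ⟨hd.1, by simp [hd.2]⟩) this)

lemma sl_sup (p : List ℤ → Prop) {Q : Cell → Prop} {x : Ch} (hx : x ∈ sup Q) :
    sl p x ∈ sup (fun d => ∃ c, Q c ∧ fc d c ∧ ¬ (p (base d) ↔ p (base c))) :=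
  map_sup (sl p) _ (fun c hc => sup_mono (fun d hd => ⟨c, hc, hd⟩) (sl_single_sup p c)) hx

lemma sit_sup : ∀ (s : ℕ) (p : ℕ → List ℤ → Prop) (Q : Cell → Prop)
    (_ : ∀ c d, Q c → fc d c → Q d) (x : Ch) (_ : x ∈ sup Q),
    sit p s x ∈ sup (fun d => Q d ∧ ∀ i < s, ∃ c e, Q c ∧ fc d c ∧ fc e c ∧
        ¬ (p i (base e) ↔ p i (base c)))
  | 0, p, Q, hQ, x, hx => by simpa [sit] using hx
  | s + 1, p, Q, hQ, x, hx => by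
      have h1 := sl_sup (p 0) hx
      have := sit_sup s (fun i => p (i + 1))
        (fun d => Q d ∧ ∃ c e, Q c ∧ fc d c ∧ fc e c ∧ ¬ (p 0 (base e) ↔ p 0 (base c))) ?_
        (sl (p 0) x) (sup_mono ?_ h1)
      · simp only [sit]
        refine sup_mono ?_ this
        rintro d ⟨⟨h1, h2⟩, h3⟩
        refine ⟨h1, fun i hi => ?_⟩
        rcases i with _ | i
        · exact h2
        · obtain ⟨c, e, h4, h5⟩ := h3 i (by omega)
          exact ⟨c, e, h4.1, h5⟩
      · rintro c d ⟨h1, c', e, h2, h3, h4⟩ hd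
        exact ⟨hQ c d h1 hd, c', e, h2, fc_trans hd h3, h4⟩
      · rintro d ⟨c, h1, h2, h3⟩
        exact ⟨hQ c d h1 h2, c, d, h1, h2, h2, h3⟩

lemma sl_congr {p p' : List ℤ → Prop} {Q : Cell → Prop} (hQ : ∀ c d, Q c → fc d c → Q d)
    (h : ∀ c, Q c → (p (base c) ↔ p' (base c))) {x : Ch} (hx : x ∈ sup Q) : sl p x = sl p' x := by
  have key : ∀ y ∈ sup Q, prj p y = prj p' y := by
    intro y hy
    have := map_sup (prj p - prj p') ⊥ (fun c hc => by
      by_cases h' : p' (base c) <;> simp [h c hc, h']) hy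
    simpa [sub_eq_zero] using this
  have hb : bd x ∈ sup Q := map_sup bd _ (fun c hc => by
    simpa using sup_mono (fun d hd => hQ c d hc hd) (bdc_sup c)) hx
  rw [sl_apply, sl_apply, key x hx, key _ hb]

lemma sit_congr : ∀ (s : ℕ) (p p' : ℕ → List ℤ → Prop) {Q : Cell → Prop}
    (_ : ∀ c d, Q c → fc d c → Q d)
    (_ : ∀ i < s, ∀ c, Q c → (p i (base c) ↔ p' i (base c))) {x : Ch} (_ : x ∈ sup Q),
    sit p s x = sit p' s x
  | 0, _, _, _, _, _, _, _ => rfl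
  | s + 1, p, p', Q, hQ, h, x, hx => by
      simp only [sit]
      rw [sl_congr hQ (h 0 (by omega)) hx]
      refine sit_congr s _ _ hQ (fun i hi => h (i + 1) (by omega)) ?_
      exact sup_mono (fun d ⟨c, h1, h2, _⟩ => hQ c d h1 h2) (sl_sup (p' 0) hx)

/-- the fundamental chain of the cube -/
noncomputable def cube (M : ℤ) : ℕ → Ch
  | 0 => Finsupp.single [] 1
  | N + 1 => ∑ v ∈ Finset.Ico (-M) M, consL (v, true) (cube M N)

lemma tele (x : Ch) (a : ℤ) (k : ℕ) :
    ∑ v ∈ Finset.Ico a (a + k), (consL (v + 1, false) x - consL (v, false) x) =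
      consL (a + k, false) x - consL (a, false) x := by
  induction k with
  | zero => simp
  | succ k ih =>
    have : Finset.Ico a (a + (k + 1 : ℕ)) = insert (a + k) (Finset.Ico a (a + k)) := by
      ext v; simp; omega
    rw [this, Finset.sum_insert (by simp), ih]
    push_cast
    rw [← add_assoc]; abel

lemma bd_strip (x : Ch) (a b : ℤ) (h : a ≤ b) :
    bd (∑ v ∈ Finset.Ico a b, consL (v, true) x) =
      consL (b, false) x - consL (a, false) x - ∑ v ∈ Finset.Ico a b, consL (v, true) (bd x) := by
  obtain ⟨k, rfl⟩ := Int.le.dest h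
  simp only [map_sum, bd_cons_true]
  rw [Finset.sum_sub_distrib, tele]

def crd (i : ℕ) (l : List ℤ) : Prop := 0 < l.getD i 0

lemma sl_cube (M : ℤ) (hM : 1 ≤ M) (N : ℕ) :
    sl (crd 0) (cube M (N + 1)) = - consL (1, false) (cube M N) := by
  have key : ∀ y : Ch, prj (crd 0) (∑ v ∈ Finset.Ico (-M) M, consL (v, true) y) =
      ∑ v ∈ Finset.Ico 1 M, consL (v, true) y := by
    intro y
    rw [map_sum]
    have hs : Finset.Ico 1 M ⊆ Finset.Ico (-M) M := by
      intro v; simp; omega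
    rw [← Finset.sum_subset hs]
    · refine Finset.sum_congr rfl fun v hv => ?_
      rw [prj_cons, prj_true]
      intro l; simp [crd] at hv ⊢; omega
    · intro v hv hv'
      rw [prj_cons, prj_false, map_zero]
      intro l; simp [crd] at hv hv' ⊢; omega
  rw [sl_apply, cube, key, bd_strip _ _ _ hM, bd_strip _ _ _ (by omega), map_sub, map_sub, key,
    prj_cons, prj_cons, prj_true, prj_false]
  · simp
  · intro l; simp [crd]; omega
  · intro l; simp [crd]; omega

lemma sl_crd_cons (i : ℕ) (x) (c : Ch) :
    sl (crd (i + 1)) (consL (x, false) c) = consL (x, false) (sl (crd i) c) := by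
  simp only [sl_apply, prj_cons, bd_cons_false, map_sub]
  rfl

lemma sit_crd_cons : ∀ (s k : ℕ) (x) (c : Ch),
    sit (fun i => crd (i + (k + 1))) s (consL (x, false) c) =
      consL (x, false) (sit (fun i => crd (i + k)) s c)
  | 0, _, _, _ => rfl
  | s + 1, k, x, c => by
      simp only [sit, Nat.zero_add]
      rw [sl_crd_cons]
      have := sit_crd_cons s (k + 1) x (sl (crd k) c)
      convert this using 3 <;> · first | (ext; congr! 1; omega) | (funext i; congr 1; omega)

noncomputable def ones : ℕ → Ch → Ch
  | 0, c => c
  | s + 1, c => consL (1, false) (ones s c)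

lemma sit_cube (M : ℤ) (hM : 1 ≤ M) : ∀ (s : ℕ),
    sit crd s (cube M (s + 2)) = (-1 : ℤ) ^ s • ones s (cube M 2)
  | 0 => by simp [sit, ones]
  | s + 1 => by
      simp only [sit]
      rw [show s + 1 + 2 = (s + 2) + 1 by ring, sl_cube M hM, sit_neg]
      have := sit_crd_cons s 0 1 (cube M (s + 2))
      simp only [Nat.zero_add, Nat.add_zero] at this
      rw [this, sit_cube M hM s]
      simp [ones, pow_succ]

def Good (M : ℤ) (N : ℕ) (c : Cell) : Prop :=
  c.length = N ∧ ∀ x ∈ c, -M ≤ x.1 ∧ x.1 + (if x.2 then 1 else 0) ≤ M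

def Bdy (M : ℤ) (N : ℕ) (c : Cell) : Prop :=
  Good M N c ∧ ∃ x ∈ c, x.2 = false ∧ (x.1 = M ∨ x.1 = -M)

lemma good_fc {M N} : ∀ c d, Good M N c → fc d c → Good M N d := by
  intro c d h hd
  refine ⟨hd.length_eq.trans h.1, ?_⟩
  have h2 := h.2
  clear h
  induction hd with
  | nil => simp
  | cons h1 _ ih =>
    simp only [List.mem_cons, forall_eq_or_imp] at h2 ⊢
    refine ⟨?_, ih h2.2⟩
    rcases h1 with rfl | ⟨h3, h4, h5⟩
    · exact h2.1
    · have := h2.1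
      simp only [h3, h4] at this ⊢
      simp at this ⊢
      omega

lemma bdy_fc {M N} : ∀ c d, Bdy M N c → fc d c → Bdy M N d := by
  intro c d h hd
  refine ⟨good_fc c d h.1 hd, ?_⟩
  have h2 := h.2
  clear h
  induction hd with
  | nil => simp at h2
  | cons h1 _ ih =>
    obtain ⟨x, hx, hx'⟩ := h2
    rcases List.mem_cons.1 hx with rfl | hx
    · rcases h1 with rfl | ⟨h3, _⟩
      · exact ⟨_, List.mem_cons_self, hx'⟩
      · simp [hx'.1] at h3
    · obtain ⟨y, hy, hy'⟩ := ih ⟨x, hx, hx'⟩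
      exact ⟨y, List.mem_cons_of_mem _ hy, hy'⟩

lemma cube_good (M : ℤ) : ∀ N, cube M N ∈ sup (Good M N)
  | 0 => single_mem_sup (by simp [Good]) 1
  | N + 1 => by
      refine sum_mem fun v hv => cons_sup _ (fun c hc => ?_) (cube_good M N)
      simp at hv
      refine ⟨by simp [hc.1], ?_⟩
      simp only [List.mem_cons, forall_eq_or_imp]
      exact ⟨by simp; omega, hc.2⟩

lemma bd_cube (M : ℤ) (hM : 1 ≤ M) : ∀ N, bd (cube M N) ∈ sup (Bdy M N)
  | 0 => by simp [cube, bdc]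
  | N + 1 => by
      rw [cube, bd_strip _ _ _ (by omega)]
      have key : ∀ v, (v = M ∨ v = -M) → ∀ c, Good M N c → Bdy M (N + 1) ((v, false) :: c) := by
        intro v hv c hc
        refine ⟨⟨by simp [hc.1], ?_⟩, ?_⟩
        · simp only [List.mem_cons, forall_eq_or_imp]
          exact ⟨by simp; omega, hc.2⟩
        · exact ⟨_, List.mem_cons_self, rfl, hv⟩
      refine sub_mem (sub_mem (cons_sup _ (key _ (Or.inl rfl)) (cube_good M N))
        (cons_sup _ (key _ (Or.inr rfl)) (cube_good M N))) ?_
      refine sum_mem fun v hv => cons_sup _ (fun c hc => ?_) (bd_cube M hM N)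
      simp at hv
      refine ⟨⟨by simp [hc.1.1], ?_⟩, ?_⟩
      · simp only [List.mem_cons, forall_eq_or_imp]
        exact ⟨by simp; omega, hc.1.2⟩
      · obtain ⟨x, hx, hx'⟩ := hc.2
        exact ⟨x, List.mem_cons_of_mem _ hx, hx'⟩

/-- number of edge directions of a cell -/
def nE : Cell → ℕ
  | [] => 0
  | (_, false) :: c => nE c
  | (_, true) :: c => nE c + 1

section fun_on_cells
variable {R : Type*} [AddCommGroup R]

/-- evaluation of a function of pairs on the 1-cells -/
noncomputable def ev (μ : List ℤ → List ℤ → R) : Ch →ₗ[ℤ] R :=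
  Finsupp.linearCombination ℤ
    (fun c : Cell => if nE c = 1 then μ (base c) (top c) else 0)

noncomputable def ev0 (ψ : List ℤ → R) : Ch →ₗ[ℤ] R :=
  Finsupp.linearCombination ℤ
    (fun c : Cell => if nE c = 0 then ψ (base c) else 0)

lemma ev_single (μ : List ℤ → List ℤ → R) (c : Cell) : ev μ (Finsupp.single c 1) =
    if nE c = 1 then μ (base c) (top c) else 0 := by simp [ev]

lemma ev0_single (ψ : List ℤ → R) (c : Cell) : ev0 ψ (Finsupp.single c 1) =
    if nE c = 0 then ψ (base c) else 0 := by simp [ev0]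

lemma ev0_cons_false (ψ : List ℤ → R) (v : ℤ) (x : Ch) :
    ev0 ψ (consL (v, false) x) = ev0 (fun l => ψ (v :: l)) x :=
  ch_ext (f := ev0 ψ ∘ₗ consL (v, false)) (g := ev0 (fun l => ψ (v :: l)))
    (by intro c; simp [ev0_single, base, nE]) x

lemma ev0_cons_true (ψ : List ℤ → R) (v : ℤ) (x : Ch) :
    ev0 ψ (consL (v, true) x) = 0 :=
  ch_ext (f := ev0 ψ ∘ₗ consL (v, true)) (g := 0)
    (by intro c; simp [ev0_single, base, nE]) x

lemma top_eq_base : ∀ c : Cell, nE c = 0 → top c = base c := by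
  intro c
  induction c with
  | nil => simp [top, base]
  | cons x c ih =>
    intro hc
    rcases x with ⟨v, _ | _⟩
    · simp only [nE] at hc
      have := ih hc
      simp [top, base] at this ⊢
      exact this
    · simp [nE] at hc

lemma ev0_bdc : ∀ (c : Cell) (ψ : List ℤ → R), ev0 ψ (bdc c) =
    if nE c = 1 then ψ (top c) - ψ (base c) else 0
  | [], ψ => by simp [bdc, nE]
  | (v, false) :: c, ψ => by
      simp only [bdc, ev0_cons_false, ev0_bdc c]
      simp [top, base, nE]
  | (v, true) :: c, ψ => by
      simp only [bdc, map_sub, ev0_cons_true, ev0_single]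
      by_cases h : nE c = 0
      · have := top_eq_base c h
        unfold top base at this
        simp [base, top, h, nE]
        rw [this]
      · have : nE c + 1 ≠ 1 := by omega
        simp [h, nE]

lemma ev_bdc (μ : List ℤ → List ℤ → R) (c : Cell)
    (h : ∃ ψ : List ℤ → R, ∀ d, fc d c → μ (base d) (top d) = ψ (top d) - ψ (base d)) :
    ev μ (bdc c) = 0 := by
  obtain ⟨ψ, hψ⟩ := h
  have h1 : ev μ (bdc c) = ev0 ψ (bd (bdc c)) := by
    have := map_sup (ev μ - ev0 ψ ∘ₗ bd) ⊥ (fun d (hd : fc d c) => by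
      simp [ev_single, ev0_bdc, hψ d hd]) (bdc_sup c)
    simpa [sub_eq_zero] using this
  rw [h1, bd_bdc, map_zero]

def onesL (s : ℕ) (l : List ℤ) : List ℤ := List.replicate s 1 ++ l

lemma ev_ones (μ : List ℤ → List ℤ → R) : ∀ (s : ℕ) (x : Ch), ev μ (ones s x) =
    ev (fun a b => μ (onesL s a) (onesL s b)) x
  | 0, x => by simp [ones, onesL]
  | s + 1, x => by
      have h1 : ∀ (μ : List ℤ → List ℤ → R) (x : Ch),
          ev μ (consL (1, false) x) = ev (fun a b => μ (1 :: a) (1 :: b)) x := fun μ x =>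
        ch_ext (f := ev μ ∘ₗ consL (1, false)) (g := ev (fun a b => μ (1 :: a) (1 :: b)))
          (by intro c; simp [ev_single, base, top, nE]) x
      rw [ones, h1, ev_ones _ s]
      simp [onesL, List.replicate_succ]

lemma bd_ones : ∀ (s : ℕ) (x : Ch), bd (ones s x) = ones s (bd x)
  | 0, x => rfl
  | s + 1, x => by simp [ones, bd_cons_false, bd_ones s]

lemma ev_square (M : ℤ) (hM : 1 ≤ M) (ν : List ℤ → List ℤ → R) (κ : R)
    (h1 : ∀ w, -M ≤ w → w < M → ν [M, w] [M, w + 1] = 0)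
    (h2 : ∀ w, -M ≤ w → w < M → w ≠ -1 → ν [-M, w] [-M, w + 1] = 0)
    (h2' : ν [-M, -1] [-M, 0] = κ)
    (h3 : ∀ w, -M ≤ w → w < M → ν [w, M] [w + 1, M] = 0)
    (h4 : ∀ w, -M ≤ w → w < M → ν [w, -M] [w + 1, -M] = 0) :
    ev ν (bd (cube M 2)) = - κ := by
  have e : bd (cube M 1) = Finsupp.single [(M, false)] 1 - Finsupp.single [(-M, false)] 1 := by
    rw [cube, bd_strip _ _ _ (by omega)]
    simp [cube, bdc]
  rw [cube, bd_strip _ _ _ (by omega), e, cube, cube]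
  simp only [map_sub, map_sum, consL_single, ev_single]
  rw [Finset.sum_eq_zero, Finset.sum_eq_single (-1 : ℤ), Finset.sum_eq_zero]
  · simpa [base, top, nE] using h2'
  · intro w hw
    simp at hw
    simpa [base, top, nE] using sub_eq_zero.2 ((h3 w hw.1 hw.2).trans (h4 w hw.1 hw.2).symm)
  · intro w hw hw'
    simp at hw
    simpa [base, top, nE] using h2 w hw.1 hw.2 hw'
  · intro h; simp at h; omega
  · intro w hw
    simp at hw
    simpa [base, top, nE] using h1 w hw.1 hw.2

theorem discrete (s : ℕ) (M : ℤ) (hM : 1 ≤ M) (p : ℕ → List ℤ → Prop)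
    (μ : List ℤ → List ℤ → R) (κ : R)
    (hb : ∀ c, Bdy M (s + 2) c → ∀ i < s, (p i (base c) ↔ 0 < (base c).getD i 0))
    (hadd : ∀ d, Good M (s + 2) d → (∀ i < s, ∃ c e, Good M (s + 2) c ∧ fc d c ∧ fc e c ∧
        ¬ (p i (base e) ↔ p i (base c))) →
      ∃ ψ : List ℤ → R, ∀ e, fc e d → μ (base e) (top e) = ψ (top e) - ψ (base e))
    (h1 : ∀ w, -M ≤ w → w < M → μ (onesL s [M, w]) (onesL s [M, w + 1]) = 0)
    (h2 : ∀ w, -M ≤ w → w < M → w ≠ -1 → μ (onesL s [-M, w]) (onesL s [-M, w + 1]) = 0)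
    (h2' : μ (onesL s [-M, -1]) (onesL s [-M, 0]) = κ)
    (h3 : ∀ w, -M ≤ w → w < M → μ (onesL s [w, M]) (onesL s [w + 1, M]) = 0)
    (h4 : ∀ w, -M ≤ w → w < M → μ (onesL s [w, -M]) (onesL s [w + 1, -M]) = 0) : κ = 0 := by
  have A : ev μ (bd (sit p s (cube M (s + 2)))) = 0 := by
    have := map_sup (ev μ ∘ₗ bd) ⊥ (fun d hd => by
      simpa using ev_bdc μ d (hadd d hd.1 hd.2)) 
      (sit_sup s p (Good M (s + 2)) good_fc _ (cube_good M (s + 2)))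
    simpa using this
  rw [bd_sit, sit_congr s p crd bdy_fc (fun i hi c hc => hb c hc i hi) (bd_cube M hM _)] at A
  have B := bd_sit s crd (cube M (s + 2))
  rw [← B, sit_cube M hM, map_smul, map_smul, bd_ones, ev_ones,
    ev_square M hM _ κ h1 h2 h2' h3 h4] at A
  rcases Nat.even_or_odd s with h | h <;> simpa [h.neg_one_pow] using A

end fun_on_cells

end CMA


namespace CMA
open Metric

/-! ### Part 2: the slicing lemma for continuous maps of cubes -/

noncomputable def ngv (q : ℝ) : ℤ := if q < 0 then 1 else 0

noncomputable def cP {s : ℕ} (x : Fin (s + 2) → ℝ) : ℝ := x (Fin.natAdd s 0)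
noncomputable def cQ {s : ℕ} (x : Fin (s + 2) → ℝ) : ℝ := x (Fin.natAdd s 1)

noncomputable def jmp {s : ℕ} (a b : Fin (s + 2) → ℝ) : ℤ :=
  if cP a < 0 ∧ cP b < 0 then ngv (cQ b) - ngv (cQ a) else 0

noncomputable def pt (M : ℕ) (N : ℕ) (l : List ℤ) : Fin N → ℝ := fun i => (l.getD i 0 : ℝ) / M

lemma fc_base {d c : Cell} (h : fc d c) : ∀ i, (base d).getD i 0 = (base c).getD i 0 ∨
    (base d).getD i 0 = (base c).getD i 0 + 1 := by
  induction h with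
  | nil => simp [base]
  | cons h1 _ ih =>
    intro i
    rcases i with _ | i
    · rcases h1 with rfl | ⟨h3, h4, h5⟩
      · simp [base]
      · simpa [base] using h5
    · simpa [base] using ih i

lemma fc_top {d c : Cell} (h : fc d c) : ∀ i, (top d).getD i 0 = (base c).getD i 0 ∨
    (top d).getD i 0 = (base c).getD i 0 + 1 := by
  induction h with
  | nil => simp [base, top]
  | @cons x y _ _ h1 _ ih =>
    intro i
    rcases i with _ | i
    · rcases h1 with rfl | ⟨h3, h4, h5⟩
      · rcases x with ⟨v, _ | _⟩ <;> simp [base, top]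
      · simpa [base, top, h4] using h5
    · simpa [base, top] using ih i

lemma pt_dist {M N : ℕ} {l l' : List ℤ} (hM : 0 < M)
    (h : ∀ i, l.getD i 0 = l'.getD i 0 ∨ l.getD i 0 = l'.getD i 0 + 1) :
    dist (pt M N l) (pt M N l') ≤ 1 / M := by
  rw [dist_pi_le_iff (by positivity)]
  intro i
  have hM' : (0 : ℝ) < M := by exact_mod_cast hM
  rw [Real.dist_eq, pt, pt, ← sub_div, abs_div, abs_of_pos hM']
  gcongr
  rcases h i with h | h <;> rw [h] <;> simp

lemma good_mem {M N : ℕ} {c : Cell} (hM : 0 < M) (h : Good M N c) :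
    pt M N (base c) ∈ closedBall 0 1 ∧ pt M N (top c) ∈ closedBall 0 1 := by
  have hM' : (0 : ℝ) < M := by exact_mod_cast hM
  have key : ∀ l : List ℤ, (∀ x ∈ l, -(M : ℤ) ≤ x ∧ x ≤ M) → pt M N l ∈ closedBall 0 1 := by
    intro l hl
    rw [mem_closedBall, dist_pi_le_iff (by positivity)]
    intro i
    have : -(M : ℤ) ≤ l.getD i 0 ∧ l.getD i 0 ≤ M := by
      by_cases hi : (i : ℕ) < l.length
      · rw [List.getD_eq_getElem _ _ hi]; exact hl _ (List.getElem_mem hi)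
      · rw [List.getD_eq_default _ _ (by omega)]; omega
    simp only [pt, Pi.zero_apply, dist_zero_right, Real.norm_eq_abs]
    rw [abs_div, abs_of_pos hM', div_le_one hM', abs_le]
    exact_mod_cast this
  constructor
  · apply key
    intro x hx
    simp only [base, List.mem_map] at hx
    obtain ⟨y, hy, rfl⟩ := hx
    have := h.2 y hy
    split_ifs at this <;> omega
  · apply key
    intro x hx
    simp only [top, List.mem_map] at hx
    obtain ⟨y, hy, rfl⟩ := hx
    have := h.2 y hy
    rcases y with ⟨v, _ | _⟩ <;> simp at this ⊢ <;> omega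

lemma norm_pt {M N : ℕ} {l : List ℤ} (hM : 0 < M) (hl : pt M N l ∈ closedBall 0 1)
    (i : Fin N) (h : l.getD i 0 = M ∨ l.getD i 0 = -M) : ‖pt M N l‖ = 1 := by
  have hM' : (0 : ℝ) < M := by exact_mod_cast hM
  refine le_antisymm (by simpa using hl) ?_
  refine le_trans ?_ (norm_le_pi_norm _ i)
  rcases h with h | h
  · rw [pt, h]; simp [hM'.ne']
  · rw [pt, h]; simp [hM'.ne']

lemma bdy_norm {M N : ℕ} {c : Cell} (hM : 0 < M) (h : Bdy M N c) : ‖pt M N (base c)‖ = 1 := by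
  obtain ⟨x, hx, h2, h3⟩ := h.2
  obtain ⟨i, hi, rfl⟩ := List.getElem_of_mem hx
  have hi' : i < N := h.1.1 ▸ hi
  refine norm_pt hM (good_mem hM h.1).1 ⟨i, hi'⟩ ?_
  rw [List.getD_eq_getElem _ _ (by simpa [base] using hi)]
  simpa [base] using h3

lemma unif {N s : ℕ} (u : (Fin N → ℝ) → (Fin s → ℝ)) (hu : ContinuousOn u (closedBall 0 1))
    (Pr : Set (Fin N → ℝ) → Prop) (hPr : ∀ A B, A ⊆ B → Pr B → Pr A)
    (h : ∀ x ∈ closedBall (0 : Fin N → ℝ) 1, u x = 0 → ∃ O ∈ 𝓝 x, Pr O) :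
    ∃ ε > 0, ∀ x ∈ closedBall (0 : Fin N → ℝ) 1, ‖u x‖ ≤ ε → Pr (ball x ε) := by
  by_contra hcon
  push Not at hcon
  have hk : ∀ k : ℕ, ∃ x ∈ closedBall (0 : Fin N → ℝ) 1, ‖u x‖ ≤ 1 / ((k : ℝ) + 1) ∧
      ¬ Pr (ball x (1 / ((k : ℝ) + 1))) := fun k => hcon _ (by positivity)
  choose x hx hux hPx using hk
  obtain ⟨x0, hx0, φ, hφ, hlim⟩ := (isCompact_closedBall (0 : Fin N → ℝ) 1).tendsto_subseq hx
  have hz : Filter.Tendsto (fun k => 1 / ((φ k : ℝ) + 1)) Filter.atTop (𝓝 0) :=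
    tendsto_one_div_add_atTop_nhds_zero_nat.comp hφ.tendsto_atTop
  have hu0 : u x0 = 0 := by
    have h1 : Filter.Tendsto (fun k => u (x (φ k))) Filter.atTop (𝓝 (u x0)) := by
      refine (hu x0 hx0).tendsto.comp ?_
      exact tendsto_nhdsWithin_iff.2 ⟨hlim, Filter.Eventually.of_forall fun k => hx _⟩
    have h2 : Filter.Tendsto (fun k => u (x (φ k))) Filter.atTop (𝓝 0) :=
      squeeze_zero_norm (fun k => hux (φ k)) hz
    exact tendsto_nhds_unique h1 h2
  obtain ⟨O, hO, hPO⟩ := h x0 hx0 hu0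
  obtain ⟨r, hr, hrO⟩ := Metric.mem_nhds_iff.1 hO
  have e1 := (Metric.tendsto_nhds.1 hlim) (r / 2) (by positivity)
  have e2 := (Metric.tendsto_nhds.1 hz) (r / 2) (by positivity)
  obtain ⟨k, h1, h2⟩ := (e1.and e2).exists
  refine hPx (φ k) (hPr _ _ ?_ hPO)
  refine subset_trans ?_ hrO
  apply ball_subset_ball'
  have : 1 / ((φ k : ℝ) + 1) < r / 2 := by
    rw [Real.dist_eq, sub_zero] at h2
    exact (le_abs_self _).trans_lt h2
  simp only [Function.comp] at h1
  linarith

lemma onesL_getD_lt (s : ℕ) (l : List ℤ) (i : ℕ) (h : i < s) : (onesL s l).getD i 0 = 1 := by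
  rw [onesL, List.getD_append _ _ _ _ (by simpa using h)]
  simp [List.getD, h]

lemma onesL_getD_add (s : ℕ) (l : List ℤ) (i : ℕ) : (onesL s l).getD (s + i) 0 = l.getD i 0 := by
  rw [onesL, List.getD_append_right _ _ _ _ (by simp)]
  simp

lemma onesL_step {s : ℕ} {l l' : List ℤ}
    (h : ∀ i, l.getD i 0 = l'.getD i 0 ∨ l.getD i 0 = l'.getD i 0 + 1) :
    ∀ i, (onesL s l).getD i 0 = (onesL s l').getD i 0 ∨
      (onesL s l).getD i 0 = (onesL s l').getD i 0 + 1 := by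
  intro i
  by_cases hi : i < s
  · left; rw [onesL_getD_lt _ _ _ hi, onesL_getD_lt _ _ _ hi]
  · obtain ⟨j, rfl⟩ := Nat.exists_eq_add_of_le (not_lt.1 hi)
    rw [onesL_getD_add, onesL_getD_add]; exact h j

theorem slicing {R : Type*} [AddCommGroup R] (s : ℕ) (u : (Fin (s + 2) → ℝ) → (Fin s → ℝ))
    (hu : ContinuousOn u (closedBall 0 1))
    (hub : ∀ x, ‖x‖ = 1 → ∀ i, u x i = x (Fin.castAdd 2 i))
    (lam : (Fin (s + 2) → ℝ) → (Fin (s + 2) → ℝ) → R) (κ : R)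
    (hadd : ∀ x ∈ closedBall (0 : Fin (s + 2) → ℝ) 1, u x = 0 → ∃ O ∈ 𝓝 x,
      ∀ a ∈ O, ∀ b ∈ O, ∀ c ∈ O, ‖a‖ ≤ 1 → ‖b‖ ≤ 1 → ‖c‖ ≤ 1 → lam a b + lam b c = lam a c)
    (hb : ∀ x, ‖x‖ = 1 → u x = 0 → ∃ O ∈ 𝓝 x, ∀ a ∈ O, ∀ b ∈ O, ‖a‖ = 1 → ‖b‖ = 1 →
      lam a b = jmp a b • κ) : κ = 0 := by
  let Pr : Set (Fin (s + 2) → ℝ) → Prop := fun O =>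
    (∀ a ∈ O, ∀ b ∈ O, ∀ c ∈ O, ‖a‖ ≤ 1 → ‖b‖ ≤ 1 → ‖c‖ ≤ 1 → lam a b + lam b c = lam a c) ∧
    (∀ a ∈ O, ∀ b ∈ O, ‖a‖ = 1 → ‖b‖ = 1 → lam a b = jmp a b • κ)
  obtain ⟨ε, hε, H⟩ := unif u hu Pr
    (fun A B hAB hB => ⟨fun a ha b hb c hc => hB.1 a (hAB ha) b (hAB hb) c (hAB hc),
      fun a ha b hb => hB.2 a (hAB ha) b (hAB hb)⟩) (by
    intro x hx hx0
    obtain ⟨O, hO, h1⟩ := hadd x hx hx0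
    by_cases hn : ‖x‖ = 1
    · obtain ⟨O', hO', h2⟩ := hb x hn hx0
      exact ⟨O ∩ O', Filter.inter_mem hO hO',
        fun a ha b hb c hc => h1 a ha.1 b hb.1 c hc.1, fun a ha b hb => h2 a ha.2 b hb.2⟩
    · refine ⟨O ∩ {y | ‖y‖ ≠ 1}, Filter.inter_mem hO ?_,
        fun a ha b hb c hc => h1 a ha.1 b hb.1 c hc.1, fun a ha b hb h => absurd h ha.2⟩
      exact (isOpen_ne_fun continuous_norm continuous_const).mem_nhds hn)
  obtain ⟨δ, hδ, hdu⟩ := Metric.uniformContinuousOn_iff.1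
    ((isCompact_closedBall (0 : Fin (s + 2) → ℝ) 1).uniformContinuousOn_of_continuous hu) ε hε
  obtain ⟨M, hM⟩ := exists_nat_gt (max (2 / δ) (1 / ε))
  have hM1 : 2 / δ < M := (le_max_left _ _).trans_lt hM
  have hM2 : 1 / ε < M := (le_max_right _ _).trans_lt hM
  have hMpos' : (0 : ℝ) < M := lt_trans (by positivity) hM2
  have hMpos : 0 < M := by exact_mod_cast hMpos'
  have hMδ : 1 / (M : ℝ) + 1 / M < δ := by
    rw [div_lt_iff₀ hδ] at hM1; rw [← add_div, div_lt_iff₀ hMpos']; linarith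
  have hMε : 1 / (M : ℝ) < ε := by
    rw [div_lt_iff₀ hε] at hM2; rw [div_lt_iff₀ hMpos']; linarith
  -- edges on the boundary
  have edge : ∀ l l' : List ℤ, ‖pt M (s + 2) (onesL s l)‖ = 1 → ‖pt M (s + 2) (onesL s l')‖ = 1 →
      (∀ i, l'.getD i 0 = l.getD i 0 ∨ l'.getD i 0 = l.getD i 0 + 1) →
      lam (pt M (s + 2) (onesL s l)) (pt M (s + 2) (onesL s l')) =
        jmp (pt M (s + 2) (onesL s l)) (pt M (s + 2) (onesL s l')) • κ := by
    intro l l' h1 h2 h3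
    have hx : ‖u (pt M (s + 2) (onesL s l))‖ ≤ ε := by
      rw [pi_norm_le_iff_of_nonneg hε.le]
      intro i
      rw [hub _ h1, pt]
      simp only [Fin.val_castAdd]
      rw [onesL_getD_lt _ _ _ i.2]
      simpa using hMε.le
    refine (H _ (by simp [h1]) hx).2 _ (mem_ball_self hε) _ ?_ h1 h2
    exact (pt_dist hMpos (onesL_step h3)).trans_lt hMε
  have hcP : ∀ a b : ℤ, cP (pt M (s + 2) (onesL s [a, b])) = a / M := by
    intro a b
    have := onesL_getD_add s [a, b] 0
    simp only [cP, pt, Fin.val_natAdd, Fin.val_zero]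
    rw [this]; simp
  have hcQ : ∀ a b : ℤ, cQ (pt M (s + 2) (onesL s [a, b])) = b / M := by
    intro a b
    have := onesL_getD_add s [a, b] 1
    simp only [cQ, pt, Fin.val_natAdd, Fin.val_one]
    rw [this]; simp
  have hjmp : ∀ a b a' b' : ℤ, jmp (pt M (s + 2) (onesL s [a, b])) (pt M (s + 2) (onesL s [a', b']))
      = if a < 0 ∧ a' < 0 then (if b' < 0 then 1 else 0) - (if b < 0 then 1 else 0) else 0 := by
    intro a b a' b'
    have : ∀ z : ℤ, (z : ℝ) / M < 0 ↔ z < 0 := by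
      intro z; rw [div_lt_iff₀ hMpos', zero_mul]; exact_mod_cast Iff.rfl
    simp only [jmp, hcP, hcQ, ngv, this]
  have hnorm : ∀ a b : ℤ, -(M : ℤ) ≤ a → a ≤ M → -(M : ℤ) ≤ b → b ≤ M →
      (a = M ∨ a = -M ∨ b = M ∨ b = -M) → ‖pt M (s + 2) (onesL s [a, b])‖ = 1 := by
    intro a b h1 h2 h3 h4 h5
    have hin : pt M (s + 2) (onesL s [a, b]) ∈ closedBall 0 1 := by
      have : Good M (s + 2) ((onesL s [a, b]).map fun z => (z, false)) := by
        refine ⟨by simp [onesL], ?_⟩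
        intro x hx
        simp only [onesL, List.map_append, List.map_replicate, List.mem_append, List.mem_replicate,
          List.map_cons, List.map_nil, List.mem_cons, List.not_mem_nil, or_false] at hx
        rcases hx with ⟨_, rfl⟩ | rfl | rfl <;> simp <;> omega
      have := (good_mem hMpos this).1
      simpa [base, Function.comp_def] using this
    have k0 := onesL_getD_add s [a, b] 0
    have k1 := onesL_getD_add s [a, b] 1
    simp only [List.getD_cons_zero, List.getD_cons_succ] at k0 k1
    rcases h5 with h | h | h | h
    · exact norm_pt hMpos hin (Fin.natAdd s 0) (by left; simpa using k0.trans h)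
    · exact norm_pt hMpos hin (Fin.natAdd s 0) (by right; simpa using k0.trans h)
    · exact norm_pt hMpos hin (Fin.natAdd s 1) (by left; simpa using k1.trans h)
    · exact norm_pt hMpos hin (Fin.natAdd s 1) (by right; simpa using k1.trans h)
  have step1 : ∀ a b : ℤ, ∀ i, [a, b + 1].getD i 0 = [a, b].getD i 0 ∨
      [a, b + 1].getD i 0 = [a, b].getD i 0 + 1 := by
    intro a b i; rcases i with _ | _ | i <;> simp
  have step2 : ∀ a b : ℤ, ∀ i, [a + 1, b].getD i 0 = [a, b].getD i 0 ∨
      [a + 1, b].getD i 0 = [a, b].getD i 0 + 1 := by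
    intro a b i; rcases i with _ | _ | i <;> simp
  have final : -κ = 0 := by
    refine discrete s M (by exact_mod_cast hMpos)
      (fun i l => ∃ h : i < s, 0 < u (pt M (s + 2) l) ⟨i, h⟩)
      (fun a b => lam (pt M (s + 2) a) (pt M (s + 2) b)) (-κ) ?_ ?_ ?_ ?_ ?_ ?_ ?_
    · intro c hc i hi
      have : u (pt M (s + 2) (base c)) ⟨i, hi⟩ = (((base c).getD i 0 : ℤ) : ℝ) / M := by
        rw [hub _ (bdy_norm hMpos hc)]; rfl
      simp only [hi, exists_true_left, this]
      rw [lt_div_iff₀ hMpos', zero_mul]; exact_mod_cast Iff.rfl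
    · intro d hd hnear
      have hdm := (good_mem hMpos hd).1
      have hx : ‖u (pt M (s + 2) (base d))‖ ≤ ε := by
        rw [pi_norm_le_iff_of_nonneg hε.le]
        intro i
        obtain ⟨c, e, hc, hdc, hec, hne⟩ := hnear i i.2
        have hcm := (good_mem hMpos hc).1
        have hem := (good_mem hMpos (good_fc c e hc hec)).1
        have d1 := pt_dist (N := s + 2) hMpos (fc_base hdc)
        have d2 := pt_dist (N := s + 2) hMpos (fc_base hec)
        have d3 : dist (u (pt M (s + 2) (base d))) (u (pt M (s + 2) (base c))) < ε :=
          hdu _ hdm _ hcm (by have : 0 < 1 / (M : ℝ) := by positivity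
                              linarith)
        have d4 : dist (u (pt M (s + 2) (base d))) (u (pt M (s + 2) (base e))) < ε := by
          refine hdu _ hdm _ hem ?_
          have := dist_triangle_right (pt M (s + 2) (base d)) (pt M (s + 2) (base e))
            (pt M (s + 2) (base c))
          linarith
        have d5 := (dist_le_pi_dist _ _ i).trans_lt d3
        have d6 := (dist_le_pi_dist _ _ i).trans_lt d4
        rw [Real.dist_eq, abs_lt] at d5 d6
        rw [Real.norm_eq_abs, abs_le]
        simp only [i.2, exists_true_left, Fin.eta] at hne
        by_cases h1 : 0 < u (pt M (s + 2) (base e)) i <;>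
          by_cases h2 : 0 < u (pt M (s + 2) (base c)) i
        · exact absurd (by simp [h1, h2]) hne
        · constructor <;> linarith
        · constructor <;> linarith
        · exact absurd (by simp [h1, h2]) hne
      refine ⟨fun l => lam (pt M (s + 2) (base d)) (pt M (s + 2) l), fun e he => ?_⟩
      have hem := good_mem hMpos (good_fc d e hd he)
      rw [eq_sub_iff_add_eq']
      refine (H _ hdm hx).1 _ (mem_ball_self hε) _ ?_ _ ?_ (by simpa using hdm)
        (by simpa using hem.1) (by simpa using hem.2)
      · exact (pt_dist hMpos (fc_base he)).trans_lt hMε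
      · exact (pt_dist hMpos (fc_top he)).trans_lt hMε
    · intro w h1 h2
      rw [edge _ _ (hnorm _ _ (by omega) (by omega) (by omega) (by omega) (by omega))
        (hnorm _ _ (by omega) (by omega) (by omega) (by omega) (by omega)) (step1 _ _), hjmp,
        if_neg (by omega), zero_smul]
    · intro w h1 h2 h3
      rw [edge _ _ (hnorm _ _ (by omega) (by omega) (by omega) (by omega) (by omega))
        (hnorm _ _ (by omega) (by omega) (by omega) (by omega) (by omega)) (step1 _ _), hjmp,
        if_pos (by omega)]
      by_cases hw : w < 0
      · rw [if_pos (by omega), if_pos hw]; simp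
      · rw [if_neg (by omega), if_neg hw]; simp
    · have := edge [-M, -1] [-M, -1 + 1] (hnorm _ _ (by omega) (by omega) (by omega) (by omega) (by omega))
        (hnorm _ _ (by omega) (by omega) (by omega) (by omega) (by omega)) (step1 _ _)
      rw [hjmp, if_pos (by omega)] at this
      simpa using this
    · intro w h1 h2
      rw [edge _ _ (hnorm _ _ (by omega) (by omega) (by omega) (by omega) (by omega))
        (hnorm _ _ (by omega) (by omega) (by omega) (by omega) (by omega)) (step2 _ _), hjmp]
      simp
    · intro w h1 h2
      rw [edge _ _ (hnorm _ _ (by omega) (by omega) (by omega) (by omega) (by omega))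
        (hnorm _ _ (by omega) (by omega) (by omega) (by omega) (by omega)) (step2 _ _), hjmp]
      simp
  simpa using final

end CMA

namespace CMA
open Metric

/-! ### Part 3: the torsor lemma -/

noncomputable def cC {s : ℕ} (x : Fin (s + 2) → ℝ) : ℂ := ⟨cP x, cQ x⟩

lemma continuous_cP {s : ℕ} : Continuous (cP : (Fin (s + 2) → ℝ) → ℝ) := continuous_apply _
lemma continuous_cQ {s : ℕ} : Continuous (cQ : (Fin (s + 2) → ℝ) → ℝ) := continuous_apply _
lemma continuous_cC {s : ℕ} : Continuous (cC : (Fin (s + 2) → ℝ) → ℂ) := by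
  have : (cC : (Fin (s + 2) → ℝ) → ℂ) = fun x => Complex.equivRealProdCLM.symm (cP x, cQ x) := rfl
  rw [this]
  exact Complex.equivRealProdCLM.symm.continuous.comp (continuous_cP.prodMk continuous_cQ)

lemma cC_ne_zero {s : ℕ} {x : Fin (s + 2) → ℝ} (hx : ‖x‖ = 1)
    (h0 : ∀ i : Fin s, x (Fin.castAdd 2 i) = 0) : cC x ≠ 0 := by
  intro h
  have hp : cP x = 0 := congrArg Complex.re h
  have hq : cQ x = 0 := congrArg Complex.im h
  have : x = 0 := by
    funext i
    refine Fin.addCases (fun j => h0 j) (fun j => ?_) i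
    fin_cases j
    · exact hp
    · exact hq
  rw [this, norm_zero] at hx
  exact zero_ne_one hx

/-- local branch of the argument together with the number of sheets crossed -/
lemma branch {s : ℕ} (x : Fin (s + 2) → ℝ) (hx : cC x ≠ 0) :
    ∃ (A : (Fin (s + 2) → ℝ) → ℝ) (k : (Fin (s + 2) → ℝ) → ℤ), ContinuousAt A x ∧
      ∃ O' ∈ 𝓝 x, ∀ a ∈ O', ∀ b ∈ O', A a = arg (cC a) + 2 * Real.pi * k a ∧ k b - k a = jmp a b := by
  by_cases hs : cC x ∈ slitPlane
  · refine ⟨fun a => arg (cC a), fun _ => 0, ?_, ?_⟩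
    · exact ContinuousAt.comp (Complex.continuousAt_arg hs) continuous_cC.continuousAt
    · rw [Complex.mem_slitPlane_iff] at hs
      have : ∃ z : ℤ, ∀ᶠ a in 𝓝 x, (0 < cP a ∨ ngv (cQ a) = z) := by
        rcases hs with h | h
        · refine ⟨0, ?_⟩
          filter_upwards [continuous_cP.continuousAt.eventually (lt_mem_nhds h)] with a ha
          exact Or.inl ha
        · change cQ x ≠ 0 at h
          rcases lt_or_gt_of_ne h with h | h
          · refine ⟨1, ?_⟩
            filter_upwards [continuous_cQ.continuousAt.eventually (gt_mem_nhds h)] with a ha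
            exact Or.inr (if_pos ha)
          · refine ⟨0, ?_⟩
            filter_upwards [continuous_cQ.continuousAt.eventually (lt_mem_nhds h)] with a ha
            exact Or.inr (if_neg (not_lt.2 (le_of_lt ha)))
      obtain ⟨z, hz⟩ := this
      refine ⟨_, hz, fun a ha b hb => ?_⟩
      change (0 < cP a ∨ ngv (cQ a) = z) at ha
      change (0 < cP b ∨ ngv (cQ b) = z) at hb
      refine ⟨by simp, ?_⟩
      rw [jmp]
      split_ifs with h
      · rcases ha with ha | ha
        · linarith [h.1]
        rcases hb with hb | hb
        · linarith [h.2]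
        rw [ha, hb]; simp
      · simp
  · have hs2 : cP x < 0 := by
      rw [Complex.mem_slitPlane_iff] at hs
      push Not at hs
      refine lt_of_le_of_ne hs.1 fun h => hx (Complex.ext h hs.2)
    have hs3 : -cC x ∈ slitPlane := by
      rw [Complex.mem_slitPlane_iff]; left
      have : (-cC x).re = - cP x := rfl
      rw [this]; linarith
    refine ⟨fun a => arg (-cC a) + Real.pi, fun a => ngv (cQ a), ?_, ?_⟩
    · refine ContinuousAt.add ?_ continuousAt_const
      exact ContinuousAt.comp (f := fun a => -cC a) (Complex.continuousAt_arg hs3)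
        continuous_cC.neg.continuousAt
    · have e := continuous_cP.continuousAt.eventually (gt_mem_nhds hs2)
      refine ⟨_, e, fun a ha b hb => ?_⟩
      change cP a < 0 at ha
      change cP b < 0 at hb
      refine ⟨?_, ?_⟩
      · simp only [ngv]
        rcases lt_trichotomy (cQ a) 0 with h | h | h
        · rw [if_pos h, Complex.arg_neg_eq_arg_add_pi_of_im_neg h]; push_cast; ring
        · rw [if_neg (by linarith)]
          have h1 : cC a = ((cP a : ℝ) : ℂ) := Complex.ext rfl h
          rw [h1, Complex.arg_ofReal_of_neg ha, ← Complex.ofReal_neg,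
            Complex.arg_ofReal_of_nonneg (by linarith)]
          simp
        · rw [if_neg (by linarith), Complex.arg_neg_eq_arg_sub_pi_of_im_pos h]; simp
      · rw [jmp, if_pos ⟨ha, hb⟩]

lemma norm_rou {g : ℕ} (hg : 0 < g) (z : rootsOfUnity g ℂ) : ‖((z : ℂˣ) : ℂ)‖ = 1 :=
  haveI : NeZero g := ⟨hg.ne'⟩
  Complex.norm_eq_one_of_mem_rootsOfUnity z.2

theorem torsor {E : Type*} [NormedAddCommGroup E] [NormedSpace ℂ E] (s g m : ℕ) (hg : 0 < g)
    (u : (Fin (s + 2) → ℝ) → (Fin s → ℝ))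
    (hu : ContinuousOn u (closedBall 0 1))
    (hub : ∀ x, ‖x‖ = 1 → ∀ i, u x i = x (Fin.castAdd 2 i))
    (σ e : (Fin (s + 2) → ℝ) → E) (he : Continuous e)
    (h : ∀ x ∈ closedBall (0 : Fin (s + 2) → ℝ) 1, u x = 0 → ∃ e0 : E, e0 ≠ 0 ∧ ∀ η > 0,
      ∃ O ∈ 𝓝 x, ∀ a ∈ O, ‖a‖ ≤ 1 → ∃ ζ : ℂ, ζ ^ g = 1 ∧ ‖σ a - ζ • e0‖ < η)
    (hb : ∀ a, ‖a‖ = 1 → σ a = exp (I * arg (cC a) * m / g) • e a) :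
    exp (2 * Real.pi * I * m / g) = 1 := by
  haveI : NeZero g := ⟨hg.ne'⟩
  have hgC : (g : ℂ) ≠ 0 := by exact_mod_cast hg.ne'
  have hex : ∀ a b, ∃ z : rootsOfUnity g ℂ, ∀ z' : rootsOfUnity g ℂ,
      ‖σ b - ((z : ℂˣ) : ℂ) • σ a‖ ≤ ‖σ b - ((z' : ℂˣ) : ℂ) • σ a‖ := fun a b => by
    obtain ⟨z, hz⟩ := Finite.exists_min fun z : rootsOfUnity g ℂ => ‖σ b - ((z : ℂˣ) : ℂ) • σ a‖
    exact ⟨z, hz⟩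
  choose lam hlam using hex
  have loc : ∀ x ∈ closedBall (0 : Fin (s + 2) → ℝ) 1, u x = 0 → ∃ O ∈ 𝓝 x, ∃ δ > 0,
      ∃ τ : (Fin (s + 2) → ℝ) → rootsOfUnity g ℂ, ∀ a ∈ O, ∀ b ∈ O, ‖a‖ ≤ 1 → ‖b‖ ≤ 1 →
      lam a b = (τ a)⁻¹ * τ b ∧ ∀ z : rootsOfUnity g ℂ, ‖σ b - ((z : ℂˣ) : ℂ) • σ a‖ < δ →
        lam a b = z := by
    intro x hx hux
    obtain ⟨e0, he0, H⟩ := h x hx hux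
    obtain ⟨d, hd, hdz⟩ : ∃ d > 0, ∀ z w : rootsOfUnity g ℂ,
        ‖((z : ℂˣ) : ℂ) • e0 - ((w : ℂˣ) : ℂ) • e0‖ < d → z = w := by
      have : ∀ p : rootsOfUnity g ℂ × rootsOfUnity g ℂ, ∃ d > 0, ‖((p.1 : ℂˣ) : ℂ) • e0 - ((p.2 : ℂˣ) : ℂ) • e0‖ < d → p.1 = p.2 := by
        intro p
        by_cases hp : p.1 = p.2
        · exact ⟨1, one_pos, fun _ => hp⟩
        · refine ⟨‖((p.1 : ℂˣ) : ℂ) • e0 - ((p.2 : ℂˣ) : ℂ) • e0‖, ?_, fun h => absurd h (lt_irrefl _)⟩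
          rw [← sub_smul, gt_iff_lt, norm_pos_iff]
          refine smul_ne_zero ?_ he0
          rw [sub_ne_zero]
          exact fun h => hp (Subtype.ext (Units.ext h))
      choose dd hdd hdd2 using this
      obtain ⟨p, hp⟩ := Finite.exists_min dd
      exact ⟨dd p, hdd p, fun z w hzw => hdd2 (z, w) (hzw.trans_le (hp (z, w)))⟩
    obtain ⟨O, hO, hOa⟩ := H (d / 8) (by positivity)
    have : ∀ a, ∃ z : rootsOfUnity g ℂ, a ∈ O → ‖a‖ ≤ 1 → ‖σ a - ((z : ℂˣ) : ℂ) • e0‖ < d / 8 := by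
      intro a
      by_cases ha : a ∈ O ∧ ‖a‖ ≤ 1
      · obtain ⟨ζ, hζ, h2⟩ := hOa a ha.1 ha.2
        exact ⟨rootsOfUnity.mkOfPowEq ζ hζ, fun _ _ => by simpa using h2⟩
      · exact ⟨1, fun h1 h2 => absurd ⟨h1, h2⟩ ha⟩
    choose τ hτ using this
    have key : ∀ a ∈ O, ∀ b ∈ O, ‖a‖ ≤ 1 → ‖b‖ ≤ 1 → ∀ z : rootsOfUnity g ℂ,
        ‖σ b - ((z : ℂˣ) : ℂ) • σ a‖ ≤ d / 2 → z = (τ a)⁻¹ * τ b := by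
      intro a ha b hb' ha1 hb1 z hz
      have : τ b = z * τ a := by
        apply hdz
        have e1 := hτ a ha ha1
        have e2 := hτ b hb' hb1
        have e3 : ((τ b : ℂˣ) : ℂ) • e0 - (((z * τ a : rootsOfUnity g ℂ) : ℂˣ) : ℂ) • e0 =
          (σ b - ((z : ℂˣ) : ℂ) • σ a) - (σ b - ((τ b : ℂˣ) : ℂ) • e0)
            + ((z : ℂˣ) : ℂ) • (σ a - ((τ a : ℂˣ) : ℂ) • e0) := by
          simp only [Subgroup.coe_mul, Units.val_mul, mul_smul, smul_sub]; abel
        rw [e3]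
        have e4 := norm_add_le ((σ b - ((z : ℂˣ) : ℂ) • σ a) - (σ b - ((τ b : ℂˣ) : ℂ) • e0))
          (((z : ℂˣ) : ℂ) • (σ a - ((τ a : ℂˣ) : ℂ) • e0))
        have e5 := norm_sub_le (σ b - ((z : ℂˣ) : ℂ) • σ a) (σ b - ((τ b : ℂˣ) : ℂ) • e0)
        rw [norm_smul, norm_rou hg, one_mul] at e4
        linarith
      rw [this, mul_comm z, inv_mul_cancel_left]
    have key2 : ∀ a ∈ O, ∀ b ∈ O, ‖a‖ ≤ 1 → ‖b‖ ≤ 1 → lam a b = (τ a)⁻¹ * τ b := by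
      intro a ha b hb' ha1 hb1
      apply key a ha b hb' ha1 hb1
      refine (hlam a b ((τ a)⁻¹ * τ b)).trans ?_
      have e1 := hτ a ha ha1
      have e2 := hτ b hb' hb1
      have e3 : σ b - ((((τ a)⁻¹ * τ b : rootsOfUnity g ℂ) : ℂˣ) : ℂ) • σ a =
          (σ b - ((τ b : ℂˣ) : ℂ) • e0) -
          ((((τ a)⁻¹ * τ b : rootsOfUnity g ℂ) : ℂˣ) : ℂ) • (σ a - ((τ a : ℂˣ) : ℂ) • e0) := by
        rw [smul_sub, smul_smul, ← Units.val_mul, ← Subgroup.coe_mul, mul_comm _ (τ a),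
          mul_inv_cancel_left]; abel
      rw [e3]
      have e4 := norm_sub_le (σ b - ((τ b : ℂˣ) : ℂ) • e0)
          (((((τ a)⁻¹ * τ b : rootsOfUnity g ℂ) : ℂˣ) : ℂ) • (σ a - ((τ a : ℂˣ) : ℂ) • e0))
      rw [norm_smul, norm_rou hg, one_mul] at e4
      linarith
    refine ⟨O, hO, d / 2, by positivity, τ, fun a ha b hb' ha1 hb1 => ⟨key2 a ha b hb' ha1 hb1, fun z hz => ?_⟩⟩
    rw [key2 a ha b hb' ha1 hb1, key a ha b hb' ha1 hb1 z hz.le]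
  have hwp : exp (2 * Real.pi * I * m / g) ^ g = 1 := by
    rw [← Complex.exp_nat_mul, Complex.exp_eq_one_iff]
    exact ⟨m, by field_simp; push_cast; ring⟩
  set ω : rootsOfUnity g ℂ := rootsOfUnity.mkOfPowEq _ hwp with hω
  have hωv : ((ω : ℂˣ) : ℂ) = exp (2 * Real.pi * I * m / g) := by simp [hω]
  have := slicing (R := Additive (rootsOfUnity g ℂ)) s u hu hub
    (fun a b => Additive.ofMul (lam a b)) (Additive.ofMul ω⁻¹) ?_ ?_
  · have h1 : ω⁻¹ = 1 := this
    rw [inv_eq_one] at h1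
    rw [← hωv, h1]; rfl
  · intro x hx hux
    obtain ⟨O, hO, δ, hδ, τ, H⟩ := loc x hx hux
    refine ⟨O, hO, fun a ha b hb' c hc ha1 hb1 hc1 => ?_⟩
    rw [← ofMul_mul, (H a ha b hb' ha1 hb1).1, (H b hb' c hc hb1 hc1).1, (H a ha c hc ha1 hc1).1]
    congr 1
    rw [mul_assoc, mul_inv_cancel_left]
  · intro x hx hux
    obtain ⟨O, hO, δ, hδ, τ, H⟩ := loc x (by simp [hx]) hux
    have hc : cC x ≠ 0 := cC_ne_zero hx fun i => by rw [← hub x hx i, hux]; rfl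
    obtain ⟨A, k, hA, hAk⟩ := branch x hc
    have hS : ContinuousAt (fun a => exp (I * A a * m / g) • e a) x := by
      refine ContinuousAt.smul ?_ he.continuousAt
      refine Complex.continuous_exp.continuousAt.comp ?_
      refine ContinuousAt.div_const (ContinuousAt.mul (ContinuousAt.mul continuousAt_const ?_) continuousAt_const) _
      exact Complex.continuous_ofReal.continuousAt.comp hA
    obtain ⟨O', hO', HO'⟩ := hAk
    obtain ⟨r, hr, hrS⟩ := Metric.continuousAt_iff.1 hS (δ / 2) (by positivity)
    refine ⟨O ∩ (O' ∩ ball x r), Filter.inter_mem hO (Filter.inter_mem hO' (ball_mem_nhds _ hr)), ?_⟩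
    rintro a ⟨ha, ha', har⟩ b ⟨hb', hb'', hbr⟩ ha1 hb1
    have hab : dist (exp (I * A b * m / g) • e b) (exp (I * A a * m / g) • e a) < δ := by
      have := hrS har
      have := hrS hbr
      have := dist_triangle_right (exp (I * A b * m / g) • e b) (exp (I * A a * m / g) • e a) (exp (I * A x * m / g) • e x)
      linarith
    have hσ : ∀ a, ‖a‖ = 1 → A a = arg (cC a) + 2 * Real.pi * k a →
        exp (I * A a * m / g) • e a = (((ω ^ k a : rootsOfUnity g ℂ) : ℂˣ) : ℂ) • σ a := by
      intro a ha hA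
      rw [hb a ha, smul_smul, hA, Subgroup.coe_zpow, Units.val_zpow_eq_zpow_val, hωv, ← Complex.exp_int_mul, ← Complex.exp_add]
      congr 2
      push_cast; ring
    rw [hσ a ha1 (HO' a ha' a ha').1, hσ b hb1 (HO' b hb'' b hb'').1, dist_eq_norm] at hab
    have e1 : (((ω ^ k b : rootsOfUnity g ℂ) : ℂˣ) : ℂ) • σ b - (((ω ^ k a : rootsOfUnity g ℂ) : ℂˣ) : ℂ) • σ a
      = (((ω ^ k b : rootsOfUnity g ℂ) : ℂˣ) : ℂ) • (σ b - ((((ω ^ k b)⁻¹ * ω ^ k a : rootsOfUnity g ℂ) : ℂˣ) : ℂ) • σ a) := by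
      rw [smul_sub, smul_smul, ← Units.val_mul, ← Subgroup.coe_mul, mul_inv_cancel_left]
    rw [e1, norm_smul, norm_rou hg, one_mul] at hab
    have h2 := (H a ha b hb' ha1.le hb1.le).2 _ hab
    simp only [h2]
    rw [← (HO' a ha' b hb'').2, ← ofMul_zpow]
    congr 1
    rw [inv_zpow, zpow_sub, mul_inv, inv_inv, mul_comm]

end CMA

namespace CMA
open Metric

/-! ### Part 4: general position -/

def clamp {N : ℕ} (x : Fin N → ℝ) : Fin N → ℝ := fun i => max (-1) (min 1 (x i))

lemma continuous_clamp {N : ℕ} : Continuous (clamp : (Fin N → ℝ) → (Fin N → ℝ)) := by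
  unfold clamp; fun_prop

lemma clamp_mem {N : ℕ} (x : Fin N → ℝ) : clamp x ∈ closedBall (0 : Fin N → ℝ) 1 := by
  rw [mem_closedBall_zero_iff, pi_norm_le_iff_of_nonneg zero_le_one]
  intro i
  rw [Real.norm_eq_abs, abs_le]
  exact ⟨le_max_left _ _, max_le (by norm_num) (min_le_left _ _)⟩

lemma clamp_eq {N : ℕ} {x : Fin N → ℝ} (h : x ∈ closedBall (0 : Fin N → ℝ) 1) : clamp x = x := by
  rw [mem_closedBall_zero_iff, pi_norm_le_iff_of_nonneg zero_le_one] at h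
  funext i
  have := h i
  rw [Real.norm_eq_abs, abs_le] at this
  rw [clamp, min_eq_right this.2, max_eq_right this.1]

theorem genpos {G : Type*} [NormedAddCommGroup G] [NormedSpace ℝ G] [FiniteDimensional ℝ G]
    (N : ℕ) (hN : N < Module.finrank ℝ G) (F : (Fin N → ℝ) → G)
    (hF : ContinuousOn F (closedBall 0 1)) (p : G) (ε : ℝ) (hε : 0 < ε)
    (hS : ∀ x, ‖x‖ = 1 → F x ≠ p) :
    ∃ F' : (Fin N → ℝ) → G, ContinuousOn F' (closedBall 0 1) ∧ (∀ x, ‖x‖ = 1 → F' x = F x) ∧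
      (∀ x ∈ closedBall (0 : Fin N → ℝ) 1, F' x ≠ p) ∧
      ∀ x ∈ closedBall (0 : Fin N → ℝ) 1, dist (F' x) (F x) < ε := by
  obtain ⟨ε1, hε1, h1⟩ : ∃ ε1 > 0, ∀ x, ‖x‖ = 1 → ε1 ≤ ‖F x - p‖ := by
    rcases (sphere (0 : Fin N → ℝ) 1).eq_empty_or_nonempty with h | h
    · refine ⟨1, one_pos, fun x hx => ?_⟩
      have : x ∈ sphere (0 : Fin N → ℝ) 1 := by simpa using hx
      rw [h] at this; exact absurd this (Set.notMem_empty _)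
    · have hc : ContinuousOn (fun x => ‖F x - p‖) (sphere (0 : Fin N → ℝ) 1) :=
        ((hF.mono sphere_subset_closedBall).sub continuousOn_const).norm
      obtain ⟨x, hx, hmin⟩ := (isCompact_sphere (0 : Fin N → ℝ) 1).exists_isMinOn h hc
      refine ⟨‖F x - p‖, ?_, fun y hy => hmin (by simpa using hy)⟩
      rw [gt_iff_lt, norm_pos_iff, sub_ne_zero]
      exact hS x (by simpa using hx)
  set e := min ε ε1 with he
  have he0 : 0 < e := lt_min hε hε1
  have hFc : Continuous (F ∘ clamp) := hF.comp_continuous continuous_clamp clamp_mem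
  obtain ⟨G1, hG1, hG1F, -⟩ := hFc.exists_contDiff_approx (1 : ℕ∞) (ε := fun _ => e / 8)
    continuous_const (fun _ => by positivity)
  have hd : Dense (Set.range G1)ᶜ := by
    refine ContDiff.dense_compl_range_of_finrank_lt_finrank (hG1.of_le ?_) (by simpa using hN)
    norm_num
  obtain ⟨q, hq, hqp⟩ := Metric.dense_iff.1 hd p (e / 8) (by positivity)
  rw [mem_ball, dist_eq_norm] at hq
  let χ : ℝ → ℝ := fun t => max 0 (min 1 (2 - 2 * t / e))
  have hχ : Continuous χ := by unfold χ; fun_prop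
  have hχ0 : ∀ t, 0 ≤ χ t := fun t => le_max_left _ _
  have hχ1 : ∀ t, χ t ≤ 1 := fun t => max_le zero_le_one (min_le_left _ _)
  have hχb : ∀ t, e ≤ t → χ t = 0 := by
    intro t ht
    apply max_eq_left
    refine (min_le_right _ _).trans ?_
    have : 1 ≤ t / e := by rwa [le_div_iff₀ he0, one_mul]
    have h2 : 2 * t / e = 2 * (t / e) := by ring
    linarith
  have hχa : ∀ t, t ≤ e / 2 → χ t = 1 := by
    intro t ht
    have : t / e ≤ 1 / 2 := by rw [div_le_iff₀ he0]; linarith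
    have h2 : 2 * t / e = 2 * (t / e) := by ring
    simp only [χ]
    rw [min_eq_left (by linarith), max_eq_right zero_le_one]
  have hdist : ∀ x ∈ closedBall (0 : Fin N → ℝ) 1, ‖G1 x + (p - q) - F x‖ < e / 4 := by
    intro x hx
    have a1 := hG1F x
    rw [Function.comp, clamp_eq hx, dist_eq_norm] at a1
    have : G1 x + (p - q) - F x = (G1 x - F x) - (q - p) := by abel
    rw [this]
    have := norm_sub_le (G1 x - F x) (q - p)
    linarith
  have hd2 : ∀ x ∈ closedBall (0 : Fin N → ℝ) 1,
      ‖χ ‖F x - p‖ • (G1 x + (p - q) - F x)‖ < e / 4 := by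
    intro x hx
    rw [norm_smul, Real.norm_of_nonneg (hχ0 _)]
    have := hdist x hx
    have h3 := hχ1 ‖F x - p‖
    have := mul_le_mul_of_nonneg_right h3 (norm_nonneg (G1 x + (p - q) - F x))
    linarith
  refine ⟨fun x => F x + χ ‖F x - p‖ • (G1 x + (p - q) - F x), ?_, ?_, ?_, ?_⟩
  · refine hF.add (ContinuousOn.smul (hχ.comp_continuousOn (hF.sub continuousOn_const).norm) ?_)
    exact (hG1.continuous.continuousOn.add continuousOn_const).sub hF
  · intro x hx
    simp only
    rw [hχb _ ((min_le_right _ _).trans (h1 x hx)), zero_smul, add_zero]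
  · intro x hx h
    by_cases hc : ‖F x - p‖ ≤ e / 2
    · simp only [hχa _ hc, one_smul] at h
      refine hqp ⟨x, ?_⟩
      have : G1 x - q = 0 := by
        have h' : F x + (G1 x + (p - q) - F x) = p + (G1 x - q) := by abel
        rw [h', add_eq_left] at h
        exact h
      exact sub_eq_zero.1 this
    · have a1 := hd2 x hx
      have a2 : F x - p = - (χ ‖F x - p‖ • (G1 x + (p - q) - F x)) := by
        rw [eq_neg_iff_add_eq_zero, sub_add_eq_add_sub]
        simp only at h
        rw [h, sub_self]
      rw [← norm_neg, ← a2] at a1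
      linarith
  · intro x hx
    rw [dist_eq_norm, add_sub_cancel_left]
    have := hd2 x hx
    have : e ≤ ε := min_le_left _ _
    linarith

end CMA

namespace CMA
open Metric

/-! ### Part 5: invariance of dimension (weak form) -/

noncomputable def sqr (z : ℂ) : ℂ := exp (I * arg z * (1 : ℕ) / (2 : ℕ)) * (Real.sqrt ‖z‖ : ℂ)

lemma sqr_sq (z : ℂ) : sqr z ^ 2 = z := by
  rw [sqr, mul_pow, ← Complex.exp_nat_mul, ← Complex.ofReal_pow, Real.sq_sqrt (norm_nonneg _)]
  have : ((2 : ℕ) : ℂ) * (I * arg z * (1 : ℕ) / (2 : ℕ)) = arg z * I := by push_cast; ring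
  rw [this, mul_comm, Complex.norm_mul_exp_arg_mul_I]

lemma thick {α β : Type*} [PseudoMetricSpace α] [PseudoMetricSpace β] {s : Set α}
    (hs : IsCompact s) (F : α → β) (hF : ContinuousOn F s) {t : Set β} (ht : IsOpen t)
    (h : ∀ x ∈ s, F x ∈ t) : ∃ ε > 0, ∀ x ∈ s, ∀ y, dist y (F x) < ε → y ∈ t := by
  obtain ⟨ε, hε, h2⟩ := (hs.image_of_continuousOn hF).exists_thickening_subset_open ht
    (Set.image_subset_iff.2 h)
  refine ⟨ε, hε, fun x hx y hy => h2 (Metric.mem_thickening_iff.2 ⟨F x, ⟨x, hx, rfl⟩, hy⟩)⟩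

def xpart {s : ℕ} (y : Fin (s + 2) → ℝ) : Fin s → ℝ := fun i => y (Fin.castAdd 2 i)

lemma continuous_xpart {s : ℕ} : Continuous (xpart : (Fin (s + 2) → ℝ) → (Fin s → ℝ)) := by
  unfold xpart; fun_prop

lemma xpart_norm {s : ℕ} (y : Fin (s + 2) → ℝ) : ‖xpart y‖ ≤ ‖y‖ := by
  rw [pi_norm_le_iff_of_nonneg (norm_nonneg _)]
  exact fun i => norm_le_pi_norm y _

theorem dim_le {G : Type*} [NormedAddCommGroup G] [NormedSpace ℝ G] [FiniteDimensional ℝ G]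
    (m : ℕ) (e : OpenPartialHomeomorph G (Fin m → ℝ)) (he : e.source.Nonempty) :
    Module.finrank ℝ G ≤ m := by
  by_contra hlt
  push Not at hlt
  obtain ⟨w0, hw0⟩ := he
  set v0 := e w0 with hv0
  have hv0t : v0 ∈ e.target := e.map_source hw0
  obtain ⟨r, hr, hrt⟩ := Metric.nhds_basis_closedBall.mem_iff.1 (e.open_target.mem_nhds hv0t)
  have hin : ∀ y ∈ closedBall (0 : Fin (m + 2) → ℝ) 1, v0 + r • xpart y ∈ e.target := by
    intro y hy
    apply hrt
    rw [mem_closedBall, dist_eq_norm, add_sub_cancel_left, norm_smul, Real.norm_of_nonneg hr.le]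
    rw [mem_closedBall_zero_iff] at hy
    have := (xpart_norm y).trans hy
    nlinarith
  let F : (Fin (m + 2) → ℝ) → G × ℂ := fun y => (e.symm (v0 + r • xpart y), cC y)
  have hF : ContinuousOn F (closedBall 0 1) := by
    refine ContinuousOn.prodMk ?_ continuous_cC.continuousOn
    exact e.continuousOn_symm.comp (continuous_const.add (continuous_xpart.const_smul r)).continuousOn hin
  have hF1 : ∀ y ∈ closedBall (0 : Fin (m + 2) → ℝ) 1, F y ∈ e.source ×ˢ (Set.univ : Set ℂ) :=
    fun y hy => ⟨e.map_target (hin y hy), trivial⟩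
  obtain ⟨ε, hε, hth⟩ := thick (isCompact_closedBall _ _) F hF (e.open_source.prod isOpen_univ) hF1
  obtain ⟨F', hF'c, hF'b, hF'p, hF'd⟩ := genpos (m + 2)
    (by rw [Module.finrank_prod, Complex.finrank_real_complex]; omega) F hF (w0, 0) ε hε (by
      intro x hx h
      have hxm : x ∈ closedBall (0 : Fin (m + 2) → ℝ) 1 := by simp [hx]
      have h1 : e.symm (v0 + r • xpart x) = w0 := congrArg Prod.fst h
      have h2 : cC x = 0 := congrArg Prod.snd h
      refine cC_ne_zero hx (fun i => ?_) h2
      have h3 : v0 + r • xpart x = v0 := by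
        have h6 := e.right_inv (hin x hxm)
        rw [h1] at h6
        exact h6.symm
      have h4 : r • xpart x = 0 := by simpa using h3
      have h5 := (smul_eq_zero.1 h4).resolve_left hr.ne'
      exact congrFun h5 i)
  have hsrc : ∀ y ∈ closedBall (0 : Fin (m + 2) → ℝ) 1, (F' y).1 ∈ e.source :=
    fun y hy => (hth y hy _ (hF'd y hy)).1
  have hfst : ContinuousOn (fun y => (F' y).1) (closedBall 0 1) := continuous_fst.comp_continuousOn hF'c
  have hsnd : ContinuousOn (fun y => (F' y).2) (closedBall 0 1) := continuous_snd.comp_continuousOn hF'c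
  have := torsor (E := ℂ) m 2 1 two_pos (fun y => r⁻¹ • (e (F' y).1 - v0)) ?_ ?_
    (fun y => sqr (F' y).2) (fun y => (Real.sqrt ‖cC y‖ : ℂ)) ?_ ?_ ?_
  · have h1 : 2 * (Real.pi : ℂ) * I * (1 : ℕ) / (2 : ℕ) = Real.pi * I := by push_cast; ring
    rw [h1, Complex.exp_pi_mul_I] at this
    norm_num at this
  · exact ((e.continuousOn.comp hfst hsrc).sub continuousOn_const).const_smul r⁻¹
  · intro x hx i
    have hxm : x ∈ closedBall (0 : Fin (m + 2) → ℝ) 1 := by simp [hx]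
    simp only [hF'b x hx, F]
    rw [e.right_inv (hin x hxm), add_sub_cancel_left, smul_smul, inv_mul_cancel₀ hr.ne', one_smul]
    rfl
  · exact Complex.continuous_ofReal.comp (Real.continuous_sqrt.comp continuous_cC.norm)
  · intro x hx hux
    have h1 : e (F' x).1 = v0 := by
      have := (smul_eq_zero.1 hux).resolve_left (inv_ne_zero hr.ne')
      exact sub_eq_zero.1 this
    have h2 : (F' x).1 = w0 := e.injOn (hsrc x hx) hw0 h1
    have h3 : (F' x).2 ≠ 0 := fun h => hF'p x hx (Prod.ext h2 h)
    refine ⟨sqr (F' x).2, ?_, ?_⟩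
    · intro h; apply h3; rw [← sqr_sq (F' x).2, h]; simp
    · intro η hη
      have h4 := (Metric.continuousWithinAt_iff.1 (hsnd x hx)) (η ^ 2) (by positivity)
      obtain ⟨d, hd, h5⟩ := h4
      refine ⟨ball x d, ball_mem_nhds _ hd, fun a ha ha1 => ?_⟩
      have h6 := h5 (show a ∈ closedBall (0 : Fin (m + 2) → ℝ) 1 by simpa using ha1) ha
      rw [dist_eq_norm] at h6
      have h7 : (F' a).2 - (F' x).2 = (sqr (F' a).2 - sqr (F' x).2) * (sqr (F' a).2 + sqr (F' x).2) := by
        have e1 := sqr_sq (F' a).2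
        have e2 := sqr_sq (F' x).2
        linear_combination e2 - e1
      rw [h7, norm_mul] at h6
      by_cases h8 : ‖sqr (F' a).2 - sqr (F' x).2‖ < η
      · exact ⟨1, by simp, by simpa using h8⟩
      · refine ⟨-1, by simp, ?_⟩
        have h9 : ‖sqr (F' a).2 + sqr (F' x).2‖ < η := by
          by_contra h10
          push Not at h8 h10
          nlinarith
        simpa using h9
  · intro a ha
    simp only [hF'b a ha, F, sqr, smul_eq_mul]

end CMA

namespace CMA
open Metric

/-! ### Part 6: the orbit space -/

def pr {n : ℕ} (f : OrdConfig n Set.univ) : ConfigModAff n := Quot.mk _ (Quot.mk _ f)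

def relSetoid (n : ℕ) : Setoid (OrdConfig n Set.univ) where
  r f g := ∃ (τ : Equiv.Perm (Fin n)) (a b : ℂ), b ≠ 0 ∧ ∀ i, g.1 i = b * f.1 (τ i) + a
  iseqv := by
    refine ⟨fun f => ⟨1, 0, 1, one_ne_zero, by simp⟩, ?_, ?_⟩
    · rintro f g ⟨τ, a, b, hb, h⟩
      refine ⟨τ⁻¹, -b⁻¹ * a, b⁻¹, inv_ne_zero hb, fun i => ?_⟩
      rw [h]; simp; field_simp; ring
    · rintro f g k ⟨τ, a, b, hb, h⟩ ⟨τ', a', b', hb', h'⟩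
      refine ⟨τ * τ', b' * a + a', b' * b, mul_ne_zero hb' hb, fun i => ?_⟩
      rw [h', h]; simp only [Equiv.Perm.mul_apply]; ring

def toQ (n : ℕ) : ConfigModAff n → Quotient (relSetoid n) :=
  Quot.lift (Quot.lift (fun f => Quotient.mk (relSetoid n) f) (by
    rintro f g ⟨σ, h⟩
    refine Quotient.sound ⟨σ, 0, 1, one_ne_zero, fun i => ?_⟩
    rw [h]; simp)) (by
    rintro c d ⟨a, b, hb, f, g, rfl, rfl, h⟩
    exact Quotient.sound ⟨1, a, b, hb, fun i => by rw [h]; simp⟩)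

lemma pr_eq_iff {n : ℕ} (f g : OrdConfig n Set.univ) : pr f = pr g ↔
    ∃ (τ : Equiv.Perm (Fin n)) (a b : ℂ), b ≠ 0 ∧ ∀ i, g.1 i = b * f.1 (τ i) + a := by
  constructor
  · intro h
    have h2 : toQ n (pr f) = toQ n (pr g) := congrArg _ h
    exact Quotient.exact h2
  · rintro ⟨τ, a, b, hb, h⟩
    have hfτ : Function.Injective (f.1 ∘ τ) := f.2.1.comp τ.injective
    let k : OrdConfig n Set.univ := ⟨f.1 ∘ τ, hfτ, fun _ => trivial⟩
    have h1 : (Quot.mk (permRel n Set.univ) f) = Quot.mk _ k := Quot.sound ⟨τ, rfl⟩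
    rw [pr, h1]
    exact Quot.sound ⟨a, b, hb, k, g, rfl, rfl, h⟩

lemma pr_quot (n : ℕ) : IsQuotientMap (pr (n := n)) :=
  (isQuotientMap_quot_mk).comp (isQuotientMap_quot_mk)

lemma pr_open (n : ℕ) : IsOpenMap (pr (n := n)) := by
  intro O hO
  rw [← (pr_quot n).isOpen_preimage]
  let act : Equiv.Perm (Fin n) → ℂ → {b : ℂ // b ≠ 0} → OrdConfig n Set.univ → OrdConfig n Set.univ :=
    fun τ a b f => ⟨fun i => b.1 * f.1 (τ i) + a, fun i j hij => by
      have h1 : b.1 * f.1 (τ i) = b.1 * f.1 (τ j) := by simpa using hij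
      exact τ.injective (f.2.1 (mul_left_cancel₀ b.2 h1)), fun _ => trivial⟩
  have hact : ∀ τ a b, Continuous (act τ a b) := by
    intro τ a b
    refine Continuous.subtype_mk (continuous_pi fun i => ?_) _
    exact (continuous_const.mul ((continuous_apply (τ i)).comp continuous_subtype_val)).add
      continuous_const
  have : pr ⁻¹' (pr '' O) = ⋃ τ, ⋃ a, ⋃ b, act τ a b ⁻¹' O := by
    ext f
    simp only [Set.mem_preimage, Set.mem_image, Set.mem_iUnion]
    constructor
    · rintro ⟨g, hg, h⟩
      obtain ⟨τ, a, b, hb, h2⟩ := (pr_eq_iff f g).1 h.symm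
      refine ⟨τ, a, ⟨b, hb⟩, ?_⟩
      have : act τ a ⟨b, hb⟩ f = g := Subtype.ext (funext fun i => (h2 i).symm)
      rwa [this]
    · rintro ⟨τ, a, b, h⟩
      exact ⟨_, h, ((pr_eq_iff _ _).2 ⟨τ, a, b.1, b.2, fun i => rfl⟩).symm⟩
  rw [this]
  exact isOpen_iUnion fun τ => isOpen_iUnion fun a => isOpen_iUnion fun b => hO.preimage (hact τ a b)

section
variable {n : ℕ} {ι : Type} [Fintype ι] (e : ι ≃ Fin n)

def Inj (ι : Type) : Set (ι → ℂ) := {f | Function.Injective f}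

lemma isOpen_Inj : IsOpen (Inj ι) := by
  have : Inj ι = ⋂ p : {p : ι × ι // p.1 ≠ p.2}, {f | f p.1.1 ≠ f p.1.2} := by
    ext f
    simp only [Inj, Set.mem_ofPred_eq, Set.mem_iInter, Subtype.forall, Prod.forall]
    constructor
    · intro h a b hab hf
      exact hab (h hf)
    · intro h a b hab
      by_contra hne
      exact h a b hne hab
  rw [this]
  refine isOpen_iInter_of_finite fun p => ?_
  exact isOpen_ne_fun (continuous_apply _) (continuous_apply _)

open Classical in
noncomputable def Pm (f : ι → ℂ) : ConfigModAff n :=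
  if h : Function.Injective f then pr ⟨f ∘ e.symm, h.comp e.symm.injective, fun _ => trivial⟩
  else pr ⟨fun i => ((i : ℕ) : ℂ), fun i j hij => Fin.ext (by simpa using hij), fun _ => trivial⟩

lemma Pm_of {f : ι → ℂ} (hf : Function.Injective f) :
    Pm e f = pr ⟨f ∘ e.symm, hf.comp e.symm.injective, fun _ => trivial⟩ := dif_pos hf

lemma Pm_eq_iff {f g : ι → ℂ} (hf : f ∈ Inj ι) (hg : g ∈ Inj ι) : Pm e f = Pm e g ↔
    ∃ (τ : Equiv.Perm ι) (a b : ℂ), b ≠ 0 ∧ ∀ i, g i = b * f (τ i) + a := by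
  rw [Pm_of e hf, Pm_of e hg, pr_eq_iff]
  constructor
  · rintro ⟨τ, a, b, hb, h⟩
    refine ⟨(e.trans τ).trans e.symm, a, b, hb, fun i => ?_⟩
    simpa using h (e i)
  · rintro ⟨τ, a, b, hb, h⟩
    refine ⟨(e.symm.trans τ).trans e, a, b, hb, fun i => ?_⟩
    simpa using h (e.symm i)

lemma Pm_cont : ContinuousOn (Pm e) (Inj ι) := by
  rw [continuousOn_iff_continuous_restrict]
  have : (Inj ι).domRestrict (Pm e) = fun f => pr ⟨f.1 ∘ e.symm,
      (show Function.Injective f.1 from f.2).comp e.symm.injective, fun _ => trivial⟩ := by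
    funext f
    exact Pm_of e f.2
  rw [this]
  refine (pr_quot n).continuous.comp (Continuous.subtype_mk ?_ _)
  exact continuous_pi fun i => (continuous_apply (e.symm i)).comp continuous_subtype_val

lemma Pm_open {O : Set (ι → ℂ)} (hO : IsOpen O) (hOI : O ⊆ Inj ι) : IsOpen (Pm e '' O) := by
  have : Pm e '' O = pr '' {f : OrdConfig n Set.univ | f.1 ∘ e ∈ O} := by
    ext y
    constructor
    · rintro ⟨f, hf, rfl⟩
      refine ⟨⟨f ∘ e.symm, (hOI hf).comp e.symm.injective, fun _ => trivial⟩, ?_, ?_⟩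
      · have : (f ∘ e.symm) ∘ e = f := by funext i; simp
        simp only [Set.mem_ofPred_eq, this, hf]
      · rw [Pm_of e (hOI hf)]
    · rintro ⟨f, hf, rfl⟩
      refine ⟨f.1 ∘ e, hf, ?_⟩
      rw [Pm_of e (hOI hf)]
      congr 1
      apply Subtype.ext
      funext i; simp
  rw [this]
  apply pr_open
  refine hO.preimage ?_
  exact continuous_pi fun i => (continuous_apply (e i)).comp continuous_subtype_val

lemma separation (q : ι → ℂ) (hq : q ∈ Inj ι) (x0 x1 : ι) (h01 : x0 ≠ x1) :
    ∃ W : Set (ι → ℂ), IsOpen W ∧ q ∈ W ∧ W ⊆ Inj ι ∧ ∀ f ∈ W, ∀ g ∈ W, ∀ (τ : Equiv.Perm ι) (a b : ℂ),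
      (∀ i, g i = b * f (τ i) + a) → ∃ b' a' : ℂ, ∀ i, q (τ i) = b' * q i + a' := by
  have hq01 : q x1 - q x0 ≠ 0 := by rw [sub_ne_zero]; exact fun h => h01 (hq h.symm)
  have : ∀ τ : Equiv.Perm ι, ∃ W : Set (ι → ℂ), IsOpen W ∧ q ∈ W ∧ ∀ f ∈ W, ∀ g ∈ W, ∀ (a b : ℂ),
      (∀ i, g i = b * f (τ i) + a) → ∃ b' a' : ℂ, ∀ i, q (τ i) = b' * q i + a' := by
    intro τ
    by_cases h : ∀ i, (q (τ i) - q (τ x0)) * (q x1 - q x0) = (q i - q x0) * (q (τ x1) - q (τ x0))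
    · refine ⟨Set.univ, isOpen_univ, trivial, fun f _ g _ a b _ => ?_⟩
      refine ⟨(q (τ x1) - q (τ x0)) / (q x1 - q x0),
        q (τ x0) - (q (τ x1) - q (τ x0)) / (q x1 - q x0) * q x0, fun i => ?_⟩
      field_simp
      linear_combination h i
    · push Not at h
      obtain ⟨i, hi⟩ := h
      let B : Set ((ι → ℂ) × (ι → ℂ)) := {p | (p.1 (τ i) - p.1 (τ x0)) * (p.2 x1 - p.2 x0) ≠
        (p.2 i - p.2 x0) * (p.1 (τ x1) - p.1 (τ x0))}
      have hB : IsOpen B := isOpen_ne_fun (by fun_prop) (by fun_prop)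
      obtain ⟨W1, W2, h1, h2, h3, h4, h5⟩ := isOpen_prod_iff.1 hB q q hi
      refine ⟨W1 ∩ W2, h1.inter h2, ⟨h3, h4⟩, fun f hf g hg a b hab => ?_⟩
      refine absurd ?_ (h5 (Set.mk_mem_prod hf.1 hg.2))
      simp only [hab]
      ring
  choose W h1 h2 h3 using this
  refine ⟨Inj ι ∩ ⋂ τ, W τ, isOpen_Inj.inter (isOpen_iInter_of_finite h1),
    ⟨hq, Set.mem_iInter.2 h2⟩, Set.inter_subset_left, ?_⟩
  intro f hf g hg τ a b h
  exact h3 τ f (Set.mem_iInter.1 hf.2 τ) g (Set.mem_iInter.1 hg.2 τ) a b h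

lemma stab (f : ι → ℂ) (hf : f ∈ Inj ι) (x0 x1 : ι) (h01 : x0 ≠ x1) (τ : Equiv.Perm ι) (b a c : ℂ)
    (hc : ∑ i, f i = Fintype.card ι * c)
    (h : ∀ i, f (τ i) = b * f i + a) : ‖b‖ = 1 ∧ ∀ i, f (τ i) - c = b * (f i - c) := by
  have hcard : (Fintype.card ι : ℂ) ≠ 0 := by
    have : 0 < Fintype.card ι := Fintype.card_pos_iff.2 ⟨x0⟩
    exact_mod_cast this.ne'
  have h1 : ∑ i, f i = b * ∑ i, f i + Fintype.card ι * a := by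
    conv_lhs => rw [← Equiv.sum_comp τ f]
    simp only [h, Finset.sum_add_distrib, ← Finset.mul_sum]
    simp
  have h2 : c = b * c + a := by
    rw [hc] at h1
    apply mul_left_cancel₀ hcard
    rw [h1]; ring
  have h3 : ∀ i, f (τ i) - c = b * (f i - c) := by
    intro i; rw [h]; linear_combination -h2
  refine ⟨?_, h3⟩
  have h4 : ∑ i, ‖f i - c‖ = ‖b‖ * ∑ i, ‖f i - c‖ := by
    conv_lhs => rw [← Equiv.sum_comp τ fun i => ‖f i - c‖]
    simp only [h3, norm_mul, ← Finset.mul_sum]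
  have h5 : ∑ i, ‖f i - c‖ ≠ 0 := by
    intro h0
    rw [Finset.sum_eq_zero_iff_of_nonneg (fun i _ => norm_nonneg _)] at h0
    have e0 := h0 x0 (Finset.mem_univ _)
    have e1 := h0 x1 (Finset.mem_univ _)
    rw [norm_eq_zero, sub_eq_zero] at e0 e1
    exact h01 (hf (e0.trans e1.symm))
  have h6 : (‖b‖ - 1) * ∑ i, ‖f i - c‖ = 0 := by linarith
  have := (mul_eq_zero.1 h6).resolve_right h5
  linarith

end

end CMA

namespace CMA
open Metric

/-! ### Part 7: the dimension of a chart -/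

section
variable {n : ℕ} {ι : Type} [Fintype ι] [DecidableEq ι] (e : ι ≃ Fin n)

noncomputable def fill (q : ι → ℂ) (x0 x1 : ι) (y : {i // i ≠ x0 ∧ i ≠ x1} → ℂ) : ι → ℂ :=
  fun i => if h : i ≠ x0 ∧ i ≠ x1 then y ⟨i, h⟩ else q i

noncomputable def nrm (q : ι → ℂ) (x0 x1 : ι) (f : ι → ℂ) : ι → ℂ :=
  fun i => (q x1 - q x0) / (f x1 - f x0) * (f i - f x0) + q x0

theorem generic_dim (m : ℕ) (Φ : OpenPartialHomeomorph (ConfigModAff n) (Fin m → ℝ))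
    (q : ι → ℂ) (hq : q ∈ Inj ι) (hqs : Pm e q ∈ Φ.source) (x0 x1 : ι) (h01 : x0 ≠ x1)
    (htriv : ∀ (τ : Equiv.Perm ι) (b a : ℂ), (∀ i, q (τ i) = b * q i + a) → τ = 1) :
    2 * (Fintype.card ι - 2) ≤ m := by
  obtain ⟨W, hWo, hqW, hWI, hW⟩ := separation q hq x0 x1 h01
  have hq01 : q x1 - q x0 ≠ 0 := by rw [sub_ne_zero]; exact fun h => h01 (hq h.symm)
  let J := {i // i ≠ x0 ∧ i ≠ x1}
  have fill0 : ∀ y : J → ℂ, fill q x0 x1 y x0 = q x0 := fun y => by simp [fill]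
  have fill1 : ∀ y : J → ℂ, fill q x0 x1 y x1 = q x1 := fun y => by simp [fill]
  have filly : ∀ (y : J → ℂ) (j : J), fill q x0 x1 y j.1 = y j := fun y j => by
    rw [fill, dif_pos j.2]
  have hfill : Continuous (fill q x0 x1) := by
    refine continuous_pi fun i => ?_
    by_cases h : i ≠ x0 ∧ i ≠ x1
    · simp only [fill, dif_pos h]; exact continuous_apply _
    · simp only [fill, dif_neg h]; exact continuous_const
  let W1 : Set (ι → ℂ) := W ∩ Pm e ⁻¹' Φ.source
  have hW1 : IsOpen W1 := ((Pm_cont e).mono hWI).isOpen_inter_preimage hWo Φ.open_source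
  let Ω : Set (J → ℂ) := fill q x0 x1 ⁻¹' W1
  have hΩ : IsOpen Ω := hW1.preimage hfill
  let β : (J → ℂ) → (Fin m → ℝ) := fun y => Φ (Pm e (fill q x0 x1 y))
  have hcont : ContinuousOn β Ω := by
    refine Φ.continuousOn.comp ((Pm_cont e).comp hfill.continuousOn fun y hy => hWI hy.1) fun y hy => hy.2
  have hinj : Set.InjOn β Ω := by
    intro y hy y' hy' h
    have h1 := Φ.injOn hy.2 hy'.2 h
    obtain ⟨τ, a, b, hb, h2⟩ := (Pm_eq_iff e (hWI hy.1) (hWI hy'.1)).1 h1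
    obtain ⟨b', a', h3⟩ := hW _ hy.1 _ hy'.1 τ a b h2
    have hτ := htriv τ b' a' h3
    subst hτ
    have e0 := h2 x0
    have e1 := h2 x1
    simp only [Equiv.Perm.one_apply, fill0, fill1] at e0 e1
    have hb1 : b = 1 := by
      apply mul_right_cancel₀ hq01
      linear_combination e0 - e1
    subst hb1
    have ha : a = 0 := by linear_combination -e0
    subst ha
    funext j
    have := h2 j.1
    simp only [Equiv.Perm.one_apply, filly] at this
    rw [this]; ring
  have hopen : ∀ O : Set (J → ℂ), IsOpen O → O ⊆ Ω → IsOpen (β '' O) := by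
    intro O hO hOΩ
    let N : (ι → ℂ) → (J → ℂ) := fun f j => nrm q x0 x1 f j.1
    have hN : ContinuousOn N (Inj ι) := by
      refine continuousOn_pi.2 fun j => ?_
      unfold N nrm
      refine ContinuousOn.add (ContinuousOn.mul (ContinuousOn.div continuousOn_const ?_ ?_) ?_) continuousOn_const
      · fun_prop
      · intro f hf
        rw [sub_ne_zero]; exact fun h => h01 (hf h.symm)
      · fun_prop
    let W2 : Set (ι → ℂ) := Inj ι ∩ N ⁻¹' O
    have hW2 : IsOpen W2 := hN.isOpen_inter_preimage isOpen_Inj hO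
    have hNf : ∀ y : J → ℂ, N (fill q x0 x1 y) = y := by
      intro y
      funext j
      simp only [N, nrm, fill0, fill1, filly, div_self hq01]; ring
    have hfN : ∀ f ∈ Inj ι, fill q x0 x1 (N f) = nrm q x0 x1 f := by
      intro f hf
      have hf01 : f x1 - f x0 ≠ 0 := by rw [sub_ne_zero]; exact fun h => h01 (hf h.symm)
      funext i
      by_cases h : i ≠ x0 ∧ i ≠ x1
      · rw [filly _ ⟨i, h⟩]
      · have : i = x0 ∨ i = x1 := by tauto
        rcases this with rfl | rfl
        · rw [fill0]; simp [nrm]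
        · rw [fill1]; simp [nrm, hf01]
    have himg : (Pm e ∘ fill q x0 x1) '' O = Pm e '' W2 := by
      ext z
      constructor
      · rintro ⟨y, hy, rfl⟩
        refine ⟨fill q x0 x1 y, ⟨hWI (hOΩ hy).1, ?_⟩, rfl⟩
        change N _ ∈ O
        rwa [hNf]
      · rintro ⟨f, hf, rfl⟩
        refine ⟨N f, hf.2, ?_⟩
        have hf01 : f x1 - f x0 ≠ 0 := by rw [sub_ne_zero]; exact fun h => h01 (hf.1 h.symm)
        have hI := hWI (hOΩ hf.2).1
        rw [Function.comp, eq_comm, Pm_eq_iff e hf.1 hI]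
        refine ⟨1, q x0 - (q x1 - q x0) / (f x1 - f x0) * f x0, (q x1 - q x0) / (f x1 - f x0),
          div_ne_zero hq01 hf01, fun i => ?_⟩
        rw [hfN f hf.1, nrm]; simp only [Equiv.Perm.one_apply]; ring
    have h1 : β '' O = Φ '' ((Pm e ∘ fill q x0 x1) '' O) := by
      rw [← Set.image_comp]; rfl
    rw [h1, himg]
    refine Φ.isOpen_image_of_subset_source (Pm_open e hW2 Set.inter_subset_left) ?_
    rw [← himg]
    rintro _ ⟨y, hy, rfl⟩
    exact (hOΩ hy).2
  let pe : PartialEquiv (J → ℂ) (Fin m → ℝ) := hinj.toPartialEquiv β Ω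
  let oe : OpenPartialHomeomorph (J → ℂ) (Fin m → ℝ) :=
    OpenPartialHomeomorph.ofContinuousOpenRestrict pe hcont (by
      intro O hO
      obtain ⟨O', hO', rfl⟩ := hO
      have h1 := hopen (Ω ∩ O') (hΩ.inter hO') Set.inter_subset_left
      convert h1 using 1
      ext z
      constructor
      · rintro ⟨⟨y, hy⟩, hy2, rfl⟩
        exact ⟨y, ⟨hy, hy2⟩, rfl⟩
      · rintro ⟨y, ⟨hy, hy2⟩, rfl⟩
        exact ⟨⟨y, hy⟩, hy2, rfl⟩) hΩ
  have hq' : fill q x0 x1 (fun j => q j.1) = q := by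
    funext i
    by_cases h : i ≠ x0 ∧ i ≠ x1
    · rw [fill, dif_pos h]
    · rw [fill, dif_neg h]
  have hne : oe.source.Nonempty := by
    refine ⟨fun j => q j.1, ?_⟩
    change fill q x0 x1 (fun j => q j.1) ∈ W1
    rw [hq']; exact ⟨hqW, hqs⟩
  have hd := dim_le m oe hne
  rw [Module.finrank_pi_fintype] at hd
  simp only [Complex.finrank_real_complex, Finset.sum_const, Finset.card_univ, smul_eq_mul] at hd
  have hc : Fintype.card J = Fintype.card ι - 2 := by
    rw [Fintype.card_subtype]
    have : (Finset.univ.filter fun i : ι => i ≠ x0 ∧ i ≠ x1) = Finset.univ \ {x0, x1} := by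
      ext i; simp
    rw [this, Finset.card_sdiff_of_subset (Finset.subset_univ _), Finset.card_pair h01, Finset.card_univ]
  omega

end

end CMA

namespace CMA
open Metric

/-! ### Part 8: Fourier coordinates -/

section
variable {g t : ℕ} [NeZero g]

noncomputable def ch (k : ZMod g) : ℂ := ZMod.stdAddChar k

lemma ch_add (k l : ZMod g) : ch (k + l) = ch k * ch l := AddChar.map_add_eq_mul _ _ _
lemma ch_zero : ch (0 : ZMod g) = 1 := AddChar.map_zero_eq_one _
lemma ch_ne_zero (k : ZMod g) : ch k ≠ 0 := by
  intro h
  have := ch_add k (-k)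
  rw [add_neg_cancel, ch_zero, h, zero_mul] at this
  exact one_ne_zero this
lemma ch_inj : Function.Injective (ch : ZMod g → ℂ) := ZMod.injective_stdAddChar
lemma ch_pow (k : ZMod g) (m : ℕ) : ch k ^ m = ch ((m : ZMod g) * k) := by
  induction m with
  | zero => simp [ch_zero]
  | succ m ih => rw [pow_succ, ih, ← ch_add]; congr 1; push_cast; ring
lemma ch_pow_g (k : ZMod g) : ch k ^ g = 1 := by
  rw [ch_pow]; simp [ch_zero]
lemma norm_ch (k : ZMod g) : ‖ch k‖ = 1 :=
  norm_eq_one_of_pow_eq_one (ch_pow_g k) (NeZero.ne g)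
lemma ch_int (j : ℤ) : ch (j : ZMod g) = exp (2 * Real.pi * I * j / g) := by
  rw [ch, ZMod.stdAddChar_coe]
lemma ch_sum (v : ZMod g) : ∑ k : ZMod g, ch (v * k) = if v = 0 then (g : ℂ) else 0 := by
  have h := AddChar.sum_mulShift v (ZMod.isPrimitive_stdAddChar g)
  rw [ZMod.card] at h
  have h2 : ∑ k : ZMod g, ch (v * k) = ∑ k : ZMod g, ZMod.stdAddChar (k * v) :=
    Finset.sum_congr rfl fun k _ => by rw [ch, mul_comm]
  rw [h2, h]
  split_ifs <;> simp

abbrev Lab (t g : ℕ) : Type := Fin (t + 1) × ZMod g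

noncomputable def fA (f : Lab t g → ℂ) (i : Fin (t + 1)) (e : ZMod g) : ℂ :=
  (g : ℂ)⁻¹ * ∑ k : ZMod g, ch (-(e * k)) * f (i, k)

lemma gC : (g : ℂ) ≠ 0 := by exact_mod_cast NeZero.ne g

lemma continuous_fA (i : Fin (t + 1)) (e : ZMod g) :
    Continuous fun f : Lab t g → ℂ => fA f i e := by
  unfold fA; fun_prop

lemma fA_mode (f : Lab t g → ℂ) (c : ℂ) (i : Fin (t + 1)) (v e : ZMod g)
    (h : ∀ k, f (i, k) = c * ch (v * k)) : fA f i e = if e = v then c else 0 := by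
  have h1 : ∑ k : ZMod g, ch (-(e * k)) * f (i, k) = c * ∑ k : ZMod g, ch ((v - e) * k) := by
    rw [Finset.mul_sum]
    refine Finset.sum_congr rfl fun k _ => ?_
    rw [h, show (v - e) * k = v * k + -(e * k) by ring, ch_add]; ring
  rw [fA, h1, ch_sum]
  have h2 : v - e = 0 ↔ e = v := by rw [sub_eq_zero, eq_comm]
  simp only [h2]
  split_ifs
  · have := gC (g := g)
    field_simp
  · simp

lemma fA_add (f f1 f2 : Lab t g → ℂ) (i : Fin (t + 1)) (e : ZMod g)
    (h : ∀ k, f (i, k) = f1 (i, k) + f2 (i, k)) : fA f i e = fA f1 i e + fA f2 i e := by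
  simp only [fA, h, mul_add, Finset.sum_add_distrib]

lemma fA_shift (f f' : Lab t g → ℂ) (b a : ℂ) (l : ZMod g) (i : Fin (t + 1)) (e : ZMod g)
    (h : ∀ k, f' (i, k) = b * f (i, k + l) + a) :
    fA f' i e = b * ch (e * l) * fA f i e + if e = 0 then a else 0 := by
  rw [fA_add f' (fun p => b * f (p.1, p.2 + l)) (fun p => a * ch (0 * p.2)) i e
    (fun k => by rw [h]; simp [ch_zero])]
  rw [fA_mode (fun p => a * ch (0 * p.2)) a i 0 e (fun k => rfl)]
  congr 1
  rw [fA, fA]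
  have : ∑ k : ZMod g, ch (-(e * k)) * f (i, k) =
      ∑ k : ZMod g, ch (-(e * (k + l))) * f (i, k + l) := by
    have h9 := Equiv.sum_comp (Equiv.addRight l) (fun k : ZMod g => ch (-(e * k)) * f (i, k))
    simpa using h9.symm
  rw [this, mul_left_comm (b * ch (e * l)), Finset.mul_sum, Finset.mul_sum, Finset.mul_sum]
  refine Finset.sum_congr rfl fun k _ => ?_
  simp only
  rw [show -(e * k) = e * l + -(e * (k + l)) by ring, ch_add]
  ring

lemma fA_inv (f : Lab t g → ℂ) (i : Fin (t + 1)) (k : ZMod g) :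
    f (i, k) = ∑ e : ZMod g, ch (e * k) * fA f i e := by
  have h1 : ∀ e : ZMod g, ch (e * k) * fA f i e =
      ∑ j : ZMod g, (g : ℂ)⁻¹ * f (i, j) * ch ((k - j) * e) := by
    intro e
    rw [fA, Finset.mul_sum, Finset.mul_sum]
    refine Finset.sum_congr rfl fun j _ => ?_
    rw [show (k - j) * e = e * k + -(e * j) by ring, ch_add]; ring
  simp only [h1]
  rw [Finset.sum_comm]
  simp only [← Finset.mul_sum, ch_sum, sub_eq_zero]
  rw [Finset.sum_eq_single k]
  · have := gC (g := g)
    simp; field_simp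
  · intro j _ hj
    rw [if_neg (Ne.symm hj), mul_zero]
  · simp

noncomputable def fB (f : Lab t g → ℂ) (i : Fin (t + 1)) (e : ZMod g) : ℂ :=
  (fA f i e - if e = 0 then fA f 0 0 else 0) / fA f 0 1

lemma fB_shift (hg : 2 ≤ g) (f f' : Lab t g → ℂ) (b a : ℂ) (hb : b ≠ 0) (l : ZMod g)
    (h : ∀ i k, f' (i, k) = b * f (i, k + l) + a) (i : Fin (t + 1)) (e : ZMod g) :
    fB f' i e = ch ((e - 1) * l) * fB f i e := by
  haveI : Fact (1 < g) := ⟨hg⟩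
  have h1 : ∀ e, fA f' i e = _ := fun e => fA_shift f f' b a l i e (h i)
  have h2 : ∀ e, fA f' 0 e = _ := fun e => fA_shift f f' b a l 0 e (h 0)
  rw [fB, fB, h1, h2, h2, if_neg one_ne_zero, one_mul, add_zero]
  have h3 : ch (e * l) = ch ((e - 1) * l) * ch l := by rw [← ch_add]; congr 1; ring
  have hl := ch_ne_zero l
  by_cases he : e = 0
  · subst he
    simp only [if_true, zero_mul, ch_zero, mul_one] at h3 ⊢
    have : b * fA f i 0 + a - (b * fA f 0 0 + a) = b * (ch ((0 - 1) * l) * ch l) * (fA f i 0 - fA f 0 0) := by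
      rw [← h3]; ring
    rw [this]
    by_cases hz : fA f 0 1 = 0
    · simp [hz]
    · field_simp
  · simp only [if_neg he]
    rw [h3]
    by_cases hz : fA f 0 1 = 0
    · simp [hz]
    · field_simp; ring

/-- the base configuration -/
noncomputable def qq (R : Fin (t + 1) → ℂ) : Lab t g → ℂ := fun p => R p.1 * ch p.2

lemma qq_stab (hg : 2 ≤ g) (R : Fin (t + 1) → ℂ) (hI : qq (g := g) R ∈ Inj (Lab t g))
    (hR : ∀ i, i ≠ 0 → ‖R i‖ < ‖R 0‖) (τ : Equiv.Perm (Lab t g)) (b a : ℂ)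
    (h : ∀ x, qq (g := g) R (τ x) = b * qq R x + a) :
    ∃ l : ZMod g, ∀ i k, τ (i, k) = (i, k + l) := by
  haveI : Fact (1 < g) := ⟨hg⟩
  have hsum : ∑ x : Lab t g, qq (g := g) R x = Fintype.card (Lab t g) * 0 := by
    rw [mul_zero, Fintype.sum_prod_type]
    refine Finset.sum_eq_zero fun i _ => ?_
    simp only [qq, ← Finset.mul_sum]
    have := ch_sum (1 : ZMod g)
    simp only [one_mul, if_neg one_ne_zero] at this
    rw [this, mul_zero]
  obtain ⟨hb, h2⟩ := stab (qq (g := g) R) hI (0, 0) (0, 1) (by simp) τ b a 0 hsum h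
  simp only [sub_zero] at h2
  have h3 := h2 (0, 0)
  have h4 : (τ (0, 0)).1 = 0 := by
    by_contra hne
    have := hR _ hne
    have h5 := congrArg norm h3
    simp only [qq, norm_mul, norm_ch, hb, mul_one, one_mul] at h5
    linarith
  have hR0 : R 0 ≠ 0 := by
    intro h0
    have : ((0 : Fin (t + 1)), (0 : ZMod g)) = (0, 1) := hI (by simp [qq, h0])
    simp at this
  have h5 : b = ch (τ (0, 0)).2 := by
    simp only [qq, h4, ch_zero, mul_one] at h3
    apply mul_left_cancel₀ hR0
    rw [h3, mul_comm]
  refine ⟨(τ (0, 0)).2, fun i k => ?_⟩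
  apply hI
  rw [h2, h5]
  simp only [qq, ch_add]; ring

end

end CMA

namespace CMA
open Metric

/-! ### Part 9: the abstract obstruction -/

theorem core_abs {n : ℕ} {ι : Type} [Fintype ι] (e : ι ≃ Fin n) {E : Type*}
    [NormedAddCommGroup E] [NormedSpace ℂ E] (s g m m' : ℕ) (hg : 0 < g)
    (Φ : OpenPartialHomeomorph (ConfigModAff n) (Fin m → ℝ)) (hm : s + 2 < m)
    (W : Set (ι → ℂ)) (hW : IsOpen W) (hWI : W ⊆ Inj ι) (hWs : ∀ f ∈ W, Pm e f ∈ Φ.source)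
    (p0 : ConfigModAff n) (hp0 : p0 ∈ Φ.source)
    (uR : (ι → ℂ) → (Fin s → ℝ)) (huR : ContinuousOn uR W)
    (σ : (ι → ℂ) → E) (hσ : ContinuousOn σ W)
    (hinv : ∀ f ∈ W, ∀ f' ∈ W, Pm e f = Pm e f' → uR f' = uR f ∧ ∃ ζ : ℂ, ζ ^ g = 1 ∧ σ f' = ζ • σ f)
    (hzero : ∀ f ∈ W, uR f = 0 → σ f = 0 → Pm e f = p0)
    (T : (Fin (s + 2) → ℝ) → (ι → ℂ)) (hTW : ∀ y ∈ closedBall (0 : Fin (s + 2) → ℝ) 1, T y ∈ W)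
    (hTc : ContinuousOn (fun y => Pm e (T y)) (closedBall 0 1))
    (ε : ℝ) (hε : 0 < ε) (hTu : ∀ y, ‖y‖ = 1 → uR (T y) = ε • xpart y)
    (ev : (Fin (s + 2) → ℝ) → E) (hev : Continuous ev)
    (hTσ : ∀ y, ‖y‖ = 1 → σ (T y) = exp (I * arg (cC y) * m' / g) • ev y)
    (hTp : ∀ y, ‖y‖ = 1 → Pm e (T y) ≠ p0) :
    exp (2 * Real.pi * I * m' / g) = 1 := by
  have hWsub : Pm e '' W ⊆ Φ.source := by rintro _ ⟨f, hf, rfl⟩; exact hWs f hf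
  have hV : IsOpen (Φ '' (Pm e '' W)) :=
    Φ.isOpen_image_of_subset_source (Pm_open e hW hWI) hWsub
  have hF : ContinuousOn (fun y => Φ (Pm e (T y))) (closedBall 0 1) :=
    Φ.continuousOn.comp hTc fun y hy => hWs _ (hTW y hy)
  obtain ⟨δ, hδ, hthick⟩ := thick (isCompact_closedBall (0 : Fin (s + 2) → ℝ) 1)
    (fun y => Φ (Pm e (T y))) hF hV
    (fun y hy => Set.mem_image_of_mem _ (Set.mem_image_of_mem _ (hTW y hy)))
  obtain ⟨F', hF'c, hF'b, hF'p, hF'd⟩ := genpos (G := Fin m → ℝ) (s + 2)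
    (by simpa using hm) _ hF (Φ p0) δ hδ (fun y hy h => by
      have hy' : y ∈ closedBall (0 : Fin (s + 2) → ℝ) 1 := by simp [hy]
      exact hTp y hy (Φ.injOn (hWs _ (hTW y hy')) hp0 h))
  have hch : ∀ y, ∃ f ∈ W, (‖y‖ ≤ 1 → Φ (Pm e f) = F' y) ∧ (‖y‖ = 1 → f = T y) := by
    intro y
    by_cases h1 : ‖y‖ = 1
    · have hy' : y ∈ closedBall (0 : Fin (s + 2) → ℝ) 1 := by simp [h1]
      exact ⟨T y, hTW y hy', fun _ => (hF'b y h1).symm, fun _ => rfl⟩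
    · by_cases h2 : ‖y‖ ≤ 1
      · have hy' : y ∈ closedBall (0 : Fin (s + 2) → ℝ) 1 := by simpa using h2
        obtain ⟨_, ⟨f, hf, rfl⟩, h3⟩ := hthick y hy' _ (hF'd y hy')
        exact ⟨f, hf, fun _ => h3, fun h => absurd h h1⟩
      · exact ⟨T 0, hTW 0 (by simp), fun h => absurd h h2, fun h => absurd h h1⟩
  choose fy hfyW hfyF hfyT using hch
  have hHc : ContinuousOn (fun y => Pm e (fy y)) (closedBall 0 1) := by
    have h1 : ContinuousOn (fun y => Φ.symm (F' y)) (closedBall 0 1) := by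
      refine Φ.continuousOn_symm.comp hF'c fun y hy => ?_
      rw [← hfyF y (by simpa using hy)]
      exact Φ.map_source (hWs _ (hfyW y))
    refine h1.congr fun y hy => ?_
    beta_reduce
    rw [← hfyF y (by simpa using hy), Φ.left_inv (hWs _ (hfyW y))]
  have key : ∀ x ∈ closedBall (0 : Fin (s + 2) → ℝ) 1, ∀ N : Set (ι → ℂ), IsOpen N → N ⊆ W →
      fy x ∈ N → ∃ O ∈ 𝓝 x, ∀ a ∈ O, ‖a‖ ≤ 1 → ∃ f ∈ N, Pm e f = Pm e (fy a) := by
    intro x hx N hN hNW hxN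
    have h1 := hHc x hx ((Pm_open e hN (hNW.trans hWI)).mem_nhds (Set.mem_image_of_mem _ hxN))
    rw [Filter.mem_map, mem_nhdsWithin_iff_exists_mem_nhds_inter] at h1
    obtain ⟨O, hO, h2⟩ := h1
    exact ⟨O, hO, fun a ha ha1 => h2 ⟨ha, by simpa using ha1⟩⟩
  refine torsor s g m' hg (fun y => ε⁻¹ • uR (fy y)) ?_ ?_ (fun y => σ (fy y)) ev hev ?_ ?_
  · refine ContinuousOn.const_smul (g := fun y => uR (fy y)) ?_ ε⁻¹
    intro x hx
    rw [ContinuousWithinAt, Metric.tendsto_nhds]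
    intro η hη
    obtain ⟨O, hO, h1⟩ := key x hx (W ∩ uR ⁻¹' ball (uR (fy x)) η)
      (huR.isOpen_inter_preimage hW isOpen_ball) Set.inter_subset_left
      ⟨hfyW x, mem_ball_self hη⟩
    filter_upwards [mem_nhdsWithin_of_mem_nhds hO, self_mem_nhdsWithin] with a ha hab
    obtain ⟨f, hf, h2⟩ := h1 a ha (by simpa using hab)
    rw [(hinv f hf.1 (fy a) (hfyW a) h2).1]
    exact hf.2
  · intro x hx i
    beta_reduce
    rw [hfyT x hx, hTu x hx, smul_smul, inv_mul_cancel₀ hε.ne', one_smul]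
    rfl
  · intro x hx hu0
    have hu1 : uR (fy x) = 0 := by
      beta_reduce at hu0
      exact (smul_eq_zero.1 hu0).resolve_left (inv_ne_zero hε.ne')
    refine ⟨σ (fy x), fun h0 => ?_, fun η hη => ?_⟩
    · have h1 := hzero _ (hfyW x) hu1 h0
      exact hF'p x hx (by rw [← hfyF x (by simpa using hx), h1])
    · obtain ⟨O, hO, h1⟩ := key x hx (W ∩ σ ⁻¹' ball (σ (fy x)) η)
        (hσ.isOpen_inter_preimage hW isOpen_ball) Set.inter_subset_left
        ⟨hfyW x, mem_ball_self hη⟩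
      refine ⟨O, hO, fun a ha ha1 => ?_⟩
      obtain ⟨f, hf, h2⟩ := h1 a ha ha1
      obtain ⟨-, ζ, hζ, h3⟩ := hinv f hf.1 (fy a) (hfyW a) h2
      refine ⟨ζ, hζ, ?_⟩
      have hζ1 : ‖ζ‖ = 1 := norm_eq_one_of_pow_eq_one hζ hg.ne'
      have h4 := hf.2
      rw [Set.mem_preimage, mem_ball, dist_eq_norm] at h4
      rw [h3, ← smul_sub, norm_smul, hζ1, one_mul]
      exact h4
  · intro a ha
    beta_reduce
    rw [hfyT a ha, hTσ a ha]

end CMA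

namespace CMA
open Metric

/-! ### Part 10: the coordinates and the test family -/

section
variable {t : ℕ}

noncomputable def toR (U : Fin t → ℂ) : Fin (t * 2) → ℝ := fun j =>
  if (finProdFinEquiv.symm j).2 = 0 then (U (finProdFinEquiv.symm j).1).re
  else (U (finProdFinEquiv.symm j).1).im

noncomputable def ofR (x : Fin (t * 2) → ℝ) : Fin t → ℂ := fun i =>
  ⟨x (finProdFinEquiv (i, 0)), x (finProdFinEquiv (i, 1))⟩

lemma toR_ofR (ε : ℝ) (x : Fin (t * 2) → ℝ) : toR (fun i => (ε : ℂ) * ofR x i) = ε • x := by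
  funext j
  obtain ⟨⟨i, k⟩, rfl⟩ := finProdFinEquiv.surjective j
  simp only [toR, Equiv.symm_apply_apply, ofR, Pi.smul_apply, smul_eq_mul]
  fin_cases k <;> simp

lemma toR_zero (U : Fin t → ℂ) (h : toR U = 0) (i : Fin t) : U i = 0 := by
  have h0 := congrFun h (finProdFinEquiv (i, 0))
  have h1 := congrFun h (finProdFinEquiv (i, 1))
  simp only [toR, Equiv.symm_apply_apply, Pi.zero_apply] at h0 h1
  apply Complex.ext
  · simpa using h0
  · simpa using h1

lemma continuous_toR : Continuous (toR (t := t)) := by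
  refine continuous_pi fun j => ?_
  unfold toR
  split_ifs
  · exact Complex.continuous_re.comp (continuous_apply _)
  · exact Complex.continuous_im.comp (continuous_apply _)

lemma mk_eq (a b : ℝ) : (⟨a, b⟩ : ℂ) = a + b * I := by
  apply Complex.ext <;> simp

lemma continuous_ofR : Continuous (ofR (t := t)) := by
  refine continuous_pi fun i => ?_
  simp only [ofR, mk_eq]
  fun_prop

lemma norm_mk_le (a b c : ℝ) (ha : |a| ≤ c) (hb : |b| ≤ c) : ‖(⟨a, b⟩ : ℂ)‖ ≤ 2 * c := by
  have := Complex.norm_le_abs_re_add_abs_im (⟨a, b⟩ : ℂ)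
  simp only at this
  linarith

lemma norm_ofR (x : Fin (t * 2) → ℝ) (i : Fin t) : ‖ofR x i‖ ≤ 2 * ‖x‖ :=
  norm_mk_le _ _ _ (norm_le_pi_norm x _) (norm_le_pi_norm x _)

lemma norm_cC {s : ℕ} (y : Fin (s + 2) → ℝ) : ‖cC y‖ ≤ 2 * ‖y‖ :=
  norm_mk_le _ _ _ (norm_le_pi_norm y _) (norm_le_pi_norm y _)

end

section
variable {g t : ℕ} [NeZero g]

noncomputable def sg (M : ZMod g → ℕ) (f : Lab t g → ℂ) : Lab t g → ℂ := fun p =>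
  if p.2 = 1 then 0 else fB f p.1 p.2 ^ M p.2

noncomputable def uu (R : Fin (t + 1) → ℂ) (f : Lab t g → ℂ) : Fin t → ℂ := fun i =>
  fB f i.succ 1 - R i.succ / R 0

lemma sg_shift (hg : 2 ≤ g) (M : ZMod g → ℕ) (w : ZMod g)
    (hM : ∀ e, e ≠ 1 → (M e : ZMod g) * (e - 1) = w)
    (f f' : Lab t g → ℂ) (b a : ℂ) (hb : b ≠ 0) (l : ZMod g)
    (h : ∀ i k, f' (i, k) = b * f (i, k + l) + a) : sg M f' = ch (w * l) • sg M f := by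
  funext p
  simp only [sg, Pi.smul_apply, smul_eq_mul]
  split_ifs with hp
  · simp
  · rw [fB_shift hg f f' b a hb l h, mul_pow, ch_pow, ← mul_assoc, hM _ hp]

lemma uu_shift (hg : 2 ≤ g) (R : Fin (t + 1) → ℂ)
    (f f' : Lab t g → ℂ) (b a : ℂ) (hb : b ≠ 0) (l : ZMod g)
    (h : ∀ i k, f' (i, k) = b * f (i, k + l) + a) : uu R f' = uu R f := by
  funext i
  simp only [uu]
  rw [fB_shift hg f f' b a hb l h, sub_self, zero_mul, ch_zero, one_mul]

lemma continuousOn_fB (i : Fin (t + 1)) (e : ZMod g) :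
    ContinuousOn (fun f : Lab t g → ℂ => fB f i e) {f | fA f 0 1 ≠ 0} := by
  unfold fB
  refine ContinuousOn.div ?_ (continuous_fA 0 1).continuousOn fun f hf => hf
  refine ContinuousOn.sub (continuous_fA i e).continuousOn ?_
  split_ifs
  · exact (continuous_fA 0 0).continuousOn
  · exact continuousOn_const

lemma continuousOn_sg (M : ZMod g → ℕ) :
    ContinuousOn (fun f : Lab t g → ℂ => sg M f) {f | fA f 0 1 ≠ 0} := by
  refine continuousOn_pi.2 fun p => ?_
  unfold sg
  split_ifs
  · exact continuousOn_const
  · exact (continuousOn_fB _ _).pow _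

lemma continuousOn_uu (R : Fin (t + 1) → ℂ) :
    ContinuousOn (fun f : Lab t g → ℂ => uu R f) {f | fA f 0 1 ≠ 0} := by
  refine continuousOn_pi.2 fun p => ?_
  exact (continuousOn_fB _ _).sub continuousOn_const

lemma zero_char (hg : 2 ≤ g) (M : ZMod g → ℕ) (hM : ∀ e, e ≠ 1 → 0 < M e) (R : Fin (t + 1) → ℂ)
    (hR : R 0 ≠ 0) (f : Lab t g → ℂ) (hf : fA f 0 1 ≠ 0) (hu : ∀ i, uu R f i = 0)
    (hs : sg M f = 0) (x : Lab t g) : f x = fA f 0 1 / R 0 * qq R x + fA f 0 0 := by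
  have : Fact (1 < g) := ⟨hg⟩
  obtain ⟨i, k⟩ := x
  have h1 : ∀ e, e ≠ 1 → fB f i e = 0 := fun e he => by
    have := congrFun hs (i, e)
    simp only [sg, if_neg he, Pi.zero_apply] at this
    exact pow_eq_zero_iff (hM e he).ne' |>.1 this
  have h2 : fB f i 1 = R i / R 0 := by
    refine Fin.cases ?_ (fun j => ?_) i
    · rw [fB, if_neg one_ne_zero, sub_zero, div_self hf, div_self hR]
    · exact sub_eq_zero.1 (hu j)
  have h3 : ∀ e, fA f i e = (if e = 1 then R i / R 0 * fA f 0 1 else 0) +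
      if e = 0 then fA f 0 0 else 0 := by
    intro e
    have h4 : fB f i e * fA f 0 1 = fA f i e - if e = 0 then fA f 0 0 else 0 :=
      div_mul_cancel₀ _ hf
    split_ifs at h4 ⊢ with ha hb hb
    · subst ha; exact absurd hb one_ne_zero
    · subst ha; rw [h2] at h4; rw [h4]; ring
    · rw [h1 e ha] at h4; linear_combination -h4
    · rw [h1 e ha] at h4; linear_combination -h4
  rw [fA_inv f i k]
  simp only [h3, mul_add, Finset.sum_add_distrib, mul_ite, mul_zero, Finset.sum_ite_eq',
    Finset.mem_univ, if_true, qq, one_mul, zero_mul, ch_zero]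
  ring

/-- the test family -/
noncomputable def Tm (R : Fin (t + 1) → ℂ) (ε : ℝ) (X : Fin (t + 1) → ℂ) (s : ℂ) : Lab t g → ℂ :=
  fun p => (R p.1 + ε * R 0 * X p.1) * ch p.2 +
    (if p.1 = Fin.last t then ε * R 0 * s else 0) * ch (2 * p.2)

lemma Tm_fA (R : Fin (t + 1) → ℂ) (ε : ℝ) (X : Fin (t + 1) → ℂ) (s : ℂ)
    (i : Fin (t + 1)) (e : ZMod g) : fA (Tm R ε X s) i e =
      (if e = 1 then R i + ε * R 0 * X i else 0) +
      if e = 2 then (if i = Fin.last t then ε * R 0 * s else 0) else 0 := by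
  rw [fA_add (Tm R ε X s) (fun p => (R p.1 + ε * R 0 * X p.1) * ch (1 * p.2))
    (fun p => (if p.1 = Fin.last t then ε * R 0 * s else 0) * ch (2 * p.2)) i e
    (fun k => by simp [Tm])]
  rw [fA_mode _ (R i + ε * R 0 * X i) i 1 e (fun k => rfl),
    fA_mode _ (if i = Fin.last t then ε * R 0 * s else 0) i 2 e (fun k => rfl)]

lemma one_ne_two (hg : 2 ≤ g) : (1 : ZMod g) ≠ 2 := by
  have : Fact (1 < g) := ⟨hg⟩
  intro h
  have : (1 : ZMod g) = 0 := by linear_combination -h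
  exact one_ne_zero this

lemma Tm_fA01 (hg : 2 ≤ g) (R : Fin (t + 1) → ℂ) (ε : ℝ) (X : Fin (t + 1) → ℂ) (hX : X 0 = 0)
    (s : ℂ) : fA (Tm (g := g) R ε X s) 0 1 = R 0 := by
  rw [Tm_fA, if_pos rfl, if_neg (one_ne_two hg), hX]; ring

lemma Tm_fB1 (hg : 2 ≤ g) (R : Fin (t + 1) → ℂ) (hR : R 0 ≠ 0) (ε : ℝ) (X : Fin (t + 1) → ℂ)
    (hX : X 0 = 0) (s : ℂ) (i : Fin (t + 1)) :
    fB (Tm (g := g) R ε X s) i 1 = R i / R 0 + ε * X i := by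
  have : Fact (1 < g) := ⟨hg⟩
  rw [fB, Tm_fA01 hg R ε X hX, Tm_fA, if_pos rfl, if_neg (one_ne_two hg), if_neg one_ne_zero]
  field_simp; ring

lemma Tm_fB (hg : 2 ≤ g) (h2 : (2 : ZMod g) = 0 → (0 : Fin (t + 1)) ≠ Fin.last t)
    (R : Fin (t + 1) → ℂ) (hR : R 0 ≠ 0) (ε : ℝ) (X : Fin (t + 1) → ℂ)
    (hX : X 0 = 0) (s : ℂ) (i : Fin (t + 1)) (e : ZMod g) (he : e ≠ 1) :
    fB (Tm (g := g) R ε X s) i e = if i = Fin.last t ∧ e = 2 then ε * s else 0 := by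
  have : Fact (1 < g) := ⟨hg⟩
  have h0 : (if e = 0 then fA (Tm (g := g) R ε X s) 0 0 else 0) = 0 := by
    split_ifs
    · rw [Tm_fA, if_neg zero_ne_one]
      split_ifs with h3 h4
      · exact absurd h4 (h2 h3.symm)
      · simp
      · simp
    · rfl
  rw [fB, Tm_fA01 hg R ε X hX, h0, Tm_fA, if_neg he]
  by_cases ha : i = Fin.last t
  · by_cases hb : e = 2
    · simp only [ha, hb, if_true, and_self]
      field_simp; ring
    · simp [hb]
  · simp [ha]

lemma Tm_shift (R : Fin (t + 1) → ℂ) (ε : ℝ) (X : Fin (t + 1) → ℂ) (s : ℂ) (l : ZMod g)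
    (i : Fin (t + 1)) (k : ZMod g) :
    Tm R ε X (s * ch (-l)) (i, k + l) = ch l * Tm R ε X s (i, k) := by
  simp only [Tm]
  have h1 : ch (k + l) = ch l * ch k := by rw [← ch_add, add_comm]
  have h2 : ch (-l) * ch (2 * (k + l)) = ch l * ch (2 * k) := by
    rw [← ch_add, ← ch_add]; congr 1; ring
  rw [h1]
  split_ifs
  · linear_combination ε * R 0 * s * h2
  · ring

lemma Tm_near (R : Fin (t + 1) → ℂ) (ε : ℝ) (hε : 0 ≤ ε) (X : Fin (t + 1) → ℂ) (s : ℂ)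
    (hX : ∀ i, ‖X i‖ ≤ 2) (hs : ‖s‖ ≤ 2) (δ : ℝ) (hδ : 0 < δ) (h : ε * ‖R 0‖ * 4 < δ) :
    Tm (g := g) R ε X s ∈ ball (qq (g := g) R) δ := by
  rw [mem_ball, dist_pi_lt_iff hδ]
  intro p
  rw [dist_eq_norm]
  have e1 : Tm (g := g) R ε X s p - qq R p = ε * R 0 * X p.1 * ch p.2 +
      (if p.1 = Fin.last t then ε * R 0 * s else 0) * ch (2 * p.2) := by
    simp only [Tm, qq]; ring
  rw [e1]
  refine lt_of_le_of_lt (norm_add_le _ _) (lt_of_le_of_lt ?_ h)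
  have hn : (0 : ℝ) ≤ ε * ‖R 0‖ := by positivity
  have a1 : ‖(ε : ℂ) * R 0 * X p.1 * ch p.2‖ ≤ ε * ‖R 0‖ * 2 := by
    rw [norm_mul, norm_ch, norm_mul, norm_mul, Complex.norm_real, Real.norm_of_nonneg hε, mul_one]
    exact mul_le_mul_of_nonneg_left (hX _) hn
  have a2 : ‖(if p.1 = Fin.last t then (ε : ℂ) * R 0 * s else 0) * ch (2 * p.2)‖ ≤ ε * ‖R 0‖ * 2 := by
    rw [norm_mul, norm_ch, mul_one]
    split_ifs
    · rw [norm_mul, norm_mul, Complex.norm_real, Real.norm_of_nonneg hε]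
      exact mul_le_mul_of_nonneg_left hs hn
    · rw [norm_zero]; positivity
  linarith

lemma continuousAt_Tm {α : Type*} [TopologicalSpace α] (R : Fin (t + 1) → ℂ) (ε : ℝ)
    (X : α → Fin (t + 1) → ℂ) (s : α → ℂ) (x : α) (hX : ContinuousAt X x) (hs : ContinuousAt s x) :
    ContinuousAt (fun y => Tm (g := g) R ε (X y) (s y)) x := by
  refine continuousAt_pi.2 fun p => ?_
  unfold Tm
  have h1 : ContinuousAt (fun y => X y p.1) x := (continuousAt_pi.1 hX) p.1
  split_ifs
  · fun_prop
  · fun_prop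

end

end CMA

namespace CMA
open Metric

/-! ### Part 11: the obstruction -/

section
variable {g t : ℕ} [NeZero g]

noncomputable def Xv (y : Fin (t * 2 + 2) → ℝ) : Fin (t + 1) → ℂ :=
  Fin.cases 0 (ofR (xpart y))

lemma continuous_Xv : Continuous (Xv (t := t)) := by
  refine continuous_pi fun i => ?_
  refine Fin.cases ?_ (fun j => ?_) i
  · exact continuous_const
  · exact (continuous_apply j).comp (continuous_ofR.comp continuous_xpart)

lemma norm_Xv (y : Fin (t * 2 + 2) → ℝ) (hy : ‖y‖ ≤ 1) (i : Fin (t + 1)) : ‖Xv y i‖ ≤ 2 := by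
  refine Fin.cases ?_ (fun j => ?_) i
  · simp [Xv]
  · have h1 := norm_ofR (xpart y) j
    have h2 := xpart_norm y
    simp only [Xv, Fin.cases_succ]
    linarith

noncomputable def sv (g : ℕ) (y : Fin (t * 2 + 2) → ℝ) : ℂ := ‖cC y‖ * exp (I * arg (cC y) / g)

lemma norm_sv (y : Fin (t * 2 + 2) → ℝ) : ‖sv g y‖ = ‖cC y‖ := by
  rw [sv, norm_mul, Complex.norm_real, norm_norm]
  have : I * (arg (cC y) : ℂ) / (g : ℂ) = ((arg (cC y) / g : ℝ) : ℂ) * I := by push_cast; ring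
  rw [this, Complex.norm_exp_ofReal_mul_I, mul_one]

lemma test_cont {n : ℕ} (e : Lab t g ≃ Fin n) (R : Fin (t + 1) → ℂ) (ε : ℝ)
    (W : Set (Lab t g → ℂ)) (hWI : W ⊆ Inj (Lab t g))
    (h : ∀ y : Fin (t * 2 + 2) → ℝ, ‖y‖ ≤ 1 → ∀ s : ℂ, ‖s‖ ≤ 2 → Tm R ε (Xv y) s ∈ W) :
    ContinuousOn (fun y : Fin (t * 2 + 2) → ℝ => Pm e (Tm R ε (Xv y) (sv g y))) (closedBall 0 1) := by
  have hball : ∀ y ∈ closedBall (0 : Fin (t * 2 + 2) → ℝ) 1, ‖y‖ ≤ 1 := fun y hy => by simpa using hy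
  have hc2 : ∀ y : Fin (t * 2 + 2) → ℝ, ‖y‖ ≤ 1 → ‖cC y‖ ≤ 2 := fun y hy => by
    have := norm_cC y; linarith
  intro x hx
  -- a function continuous at x with the right classes suffices
  have main : ∀ s' : (Fin (t * 2 + 2) → ℝ) → ℂ, ContinuousAt s' x →
      (∀ᶠ y in 𝓝[closedBall 0 1] x, ‖s' y‖ ≤ 2 ∧
        Pm e (Tm R ε (Xv y) (sv g y)) = Pm e (Tm R ε (Xv y) (s' y))) →
      ContinuousWithinAt (fun y : Fin (t * 2 + 2) → ℝ => Pm e (Tm R ε (Xv y) (sv g y)))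
        (closedBall 0 1) x := by
    intro s' hs' hev
    have hx' := hev.self_of_nhdsWithin hx
    have h1 : ContinuousWithinAt (fun y => Tm (g := g) R ε (Xv y) (s' y)) (closedBall 0 1) x :=
      (continuousAt_Tm R ε Xv s' x continuous_Xv.continuousAt hs').continuousWithinAt
    have h2 : ContinuousAt (Pm e) (Tm R ε (Xv x) (s' x)) :=
      (Pm_cont e).continuousAt (isOpen_Inj.mem_nhds (hWI (h x (hball x hx) _ hx'.1)))
    have h3 : ContinuousWithinAt (fun y => Pm e (Tm R ε (Xv y) (s' y))) (closedBall 0 1) x :=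
      ContinuousAt.comp_continuousWithinAt (f := fun y => Tm (g := g) R ε (Xv y) (s' y)) h2 h1
    exact h3.congr_of_eventuallyEq (hev.mono fun y hy => hy.2) hx'.2
  by_cases hcx : cC x = 0
  · refine main (sv g) ?_ ?_
    · rw [ContinuousAt, show sv g x = 0 by simp [sv, hcx], tendsto_zero_iff_norm_tendsto_zero]
      simp only [norm_sv]
      have : ContinuousAt (fun y : Fin (t * 2 + 2) → ℝ => ‖cC y‖) x :=
        (continuous_cC.norm).continuousAt
      rw [ContinuousAt, hcx, norm_zero] at this
      exact this
    · filter_upwards [self_mem_nhdsWithin] with y hy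
      exact ⟨by rw [norm_sv]; exact hc2 y (hball y hy), rfl⟩
  · obtain ⟨A, k, hA, O, hO, hOk⟩ := branch x hcx
    refine main (fun y => ‖cC y‖ * exp (I * A y / g)) ?_ ?_
    · have h1 : ContinuousAt (fun y : Fin (t * 2 + 2) → ℝ => (‖cC y‖ : ℂ)) x :=
        (Complex.continuous_ofReal.comp continuous_cC.norm).continuousAt
      have h2 : ContinuousAt (fun y : Fin (t * 2 + 2) → ℝ => (A y : ℂ)) x :=
        Complex.continuous_ofReal.continuousAt.comp hA
      refine h1.mul (Complex.continuous_exp.continuousAt.comp ?_)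
      exact (continuousAt_const.mul h2).div_const _
    · filter_upwards [mem_nhdsWithin_of_mem_nhds hO, self_mem_nhdsWithin] with y hyO hy
      have hyA := (hOk y hyO y hyO).1
      have e1 : (‖cC y‖ : ℂ) * exp (I * A y / g) = sv g y * ch (-((-k y : ℤ) : ZMod g)) := by
        rw [← Int.cast_neg, neg_neg, ch_int, sv, mul_assoc, ← Complex.exp_add, hyA]
        congr 2
        push_cast; ring
      have hn : ‖(‖cC y‖ : ℂ) * exp (I * A y / g)‖ ≤ 2 := by
        rw [e1, norm_mul, norm_ch, mul_one, norm_sv]; exact hc2 y (hball y hy)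
      refine ⟨hn, ?_⟩
      rw [Pm_eq_iff e (hWI (h y (hball y hy) _ (by rw [norm_sv]; exact hc2 y (hball y hy))))
        (hWI (h y (hball y hy) _ hn))]
      refine ⟨(Equiv.refl _).prodCongr (Equiv.subRight ((-k y : ℤ) : ZMod g)), 0, ch ((-k y : ℤ) : ZMod g),
        ch_ne_zero _, ?_⟩
      rintro ⟨i, j⟩
      rw [e1, add_zero]
      have h5 := Tm_shift R ε (Xv y) (sv g y) ((-k y : ℤ) : ZMod g) i (j - ((-k y : ℤ) : ZMod g))
      rw [sub_add_cancel] at h5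
      rw [h5]
      simp

theorem core {n : ℕ} (e : Lab t g ≃ Fin n) (hg : 2 ≤ g)
    (h2 : (2 : ZMod g) = 0 → (0 : Fin (t + 1)) ≠ Fin.last t) (m : ℕ)
    (Φ : OpenPartialHomeomorph (ConfigModAff n) (Fin m → ℝ)) (R : Fin (t + 1) → ℂ)
    (hq : qq (g := g) R ∈ Inj (Lab t g)) (hR : ∀ i, i ≠ 0 → ‖R i‖ < ‖R 0‖)
    (hqs : Pm e (qq (g := g) R) ∈ Φ.source) (hm : t * 2 + 2 < m) (w : ZMod g) (hw : w ≠ 0)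
    (hdiv : ∀ v : ZMod g, v ≠ 0 → ∃ M : ℕ, 0 < M ∧ (M : ZMod g) * v = w) : False := by
  have hF : Fact (1 < g) := ⟨hg⟩
  have hR0 : R 0 ≠ 0 := by
    intro h0
    have : ((0 : Fin (t + 1)), (0 : ZMod g)) = (0, 1) := hq (by simp [qq, h0])
    simp at this
  have hM : ∀ ee : ZMod g, ∃ M : ℕ, ee ≠ 1 → 0 < M ∧ (M : ZMod g) * (ee - 1) = w := fun ee => by
    by_cases hee : ee = 1
    · exact ⟨0, fun h => absurd hee h⟩
    · obtain ⟨M, hM⟩ := hdiv (ee - 1) (sub_ne_zero.2 hee)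
      exact ⟨M, fun _ => hM⟩
  choose M hM using hM
  obtain ⟨W0, hW0o, hqW0, hW0I, hW0⟩ := separation (qq (g := g) R) hq (0, 0) (0, 1) (by simp)
  set W : Set (Lab t g → ℂ) := (W0 ∩ Pm e ⁻¹' Φ.source) ∩ {f | fA f 0 1 ≠ 0} with hWdef
  have hWo : IsOpen W := by
    refine IsOpen.inter (((Pm_cont e).mono hW0I).isOpen_inter_preimage hW0o Φ.open_source) ?_
    exact isOpen_ne.preimage (continuous_fA 0 1)
  have hWI : W ⊆ Inj (Lab t g) := fun f hf => hW0I hf.1.1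
  have hWA : W ⊆ {f | fA f 0 1 ≠ 0} := fun f hf => hf.2
  have hqA : fA (qq (g := g) R) 0 1 ≠ 0 := by
    rw [fA_mode (qq (g := g) R) (R 0) 0 1 1 (fun k => by simp [qq]), if_pos rfl]; exact hR0
  have hqW : qq (g := g) R ∈ W := ⟨⟨hqW0, hqs⟩, hqA⟩
  have hsh : ∀ f ∈ W, ∀ f' ∈ W, Pm e f = Pm e f' → ∃ (b a : ℂ) (l : ZMod g), b ≠ 0 ∧
      ∀ i k, f' (i, k) = b * f (i, k + l) + a := by
    intro f hf f' hf' h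
    obtain ⟨τ, a, b, hb, h3⟩ := (Pm_eq_iff e (hWI hf) (hWI hf')).1 h
    obtain ⟨b', a', h4⟩ := hW0 f hf.1.1 f' hf'.1.1 τ a b h3
    obtain ⟨l, hl⟩ := qq_stab hg R hq hR τ b' a' h4
    exact ⟨b, a, l, hb, fun i k => by rw [h3, hl]⟩
  obtain ⟨δ, hδ, hδW⟩ := Metric.isOpen_iff.1 hWo _ hqW
  obtain ⟨ε, hε, hεδ⟩ : ∃ ε : ℝ, 0 < ε ∧ ε * ‖R 0‖ * 4 < δ := by
    have hn : 0 < ‖R 0‖ := norm_pos_iff.2 hR0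
    refine ⟨δ / (8 * ‖R 0‖), by positivity, ?_⟩
    have : δ / (8 * ‖R 0‖) * ‖R 0‖ * 4 = δ / 2 := by field_simp; norm_num
    rw [this]; linarith
  have hTW : ∀ y : Fin (t * 2 + 2) → ℝ, ‖y‖ ≤ 1 → ∀ s : ℂ, ‖s‖ ≤ 2 →
      Tm (g := g) R ε (Xv y) s ∈ W := fun y hy s hs =>
    hδW (Tm_near R ε hε.le (Xv y) s (norm_Xv y hy) hs δ hδ hεδ)
  have hX0 : ∀ y : Fin (t * 2 + 2) → ℝ, Xv y 0 = 0 := fun y => rfl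
  have hsv : ∀ y : Fin (t * 2 + 2) → ℝ, ‖y‖ ≤ 1 → ‖sv g y‖ ≤ 2 := fun y hy => by
    rw [norm_sv]; have := norm_cC y; linarith
  have h21 : (2 : ZMod g) ≠ 1 := (one_ne_two hg).symm
  have huu : ∀ y : Fin (t * 2 + 2) → ℝ, ∀ s, uu R (Tm (g := g) R ε (Xv y) s) =
      fun i => (ε : ℂ) * ofR (xpart y) i := fun y s => by
    funext i
    rw [uu, Tm_fB1 hg R hR0 ε _ (hX0 y)]
    simp [Xv]
  have hsg : ∀ y : Fin (t * 2 + 2) → ℝ, ∀ s, sg M (Tm (g := g) R ε (Xv y) s) =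
      fun p => if p.1 = Fin.last t ∧ p.2 = 2 then (ε * s) ^ M 2 else 0 := fun y s => by
    funext p
    rw [sg]
    by_cases hp : p.2 = 1
    · rw [if_pos hp, if_neg]; rintro ⟨-, h⟩; rw [hp] at h; exact h21 h.symm
    · rw [if_neg hp, Tm_fB hg h2 R hR0 ε _ (hX0 y) s _ _ hp]
      by_cases h5 : p.1 = Fin.last t ∧ p.2 = 2
      · rw [if_pos h5, if_pos h5, h5.2]
      · rw [if_neg h5, if_neg h5, zero_pow (hM _ hp).1.ne']
  have hqu : uu R (qq (g := g) R) = 0 := by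
    funext i
    simp only [uu, Pi.zero_apply]
    rw [fB, if_neg one_ne_zero, fA_mode (qq (g := g) R) (R i.succ) i.succ 1 1 (fun k => by simp [qq]),
      fA_mode (qq (g := g) R) (R 0) 0 1 1 (fun k => by simp [qq])]
    simp
  have hqs0 : sg M (qq (g := g) R) = 0 := by
    funext p
    rw [sg]
    split_ifs with hp
    · rfl
    · have hA : ∀ i (ee : ZMod g), ee ≠ 1 → fA (qq (g := g) R) i ee = 0 := fun i ee he => by
        rw [fA_mode (qq (g := g) R) (R i) i 1 ee (fun k => by simp [qq]), if_neg he]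
      rw [fB, hA _ _ hp, hA _ _ zero_ne_one]
      simp [(hM _ hp).1.ne']
  have concl := core_abs e (t * 2) g m (M 2) (by omega) Φ hm W hWo hWI (fun f hf => hf.1.2)
    (Pm e (qq (g := g) R)) hqs (fun f => toR (uu R f))
    (continuous_toR.comp_continuousOn ((continuousOn_uu R).mono hWA))
    (fun f => sg M f) ((continuousOn_sg M).mono hWA)
    (fun f hf f' hf' h => by
      obtain ⟨b, a, l, hb, h3⟩ := hsh f hf f' hf' h
      refine ⟨?_, ch (w * l), ch_pow_g _, ?_⟩
      · simp only [uu_shift hg R f f' b a hb l h3]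
      · exact sg_shift hg M w (fun ee he => (hM ee he).2) f f' b a hb l h3)
    (fun f hf hu hs => by
      have h3 := zero_char hg M (fun ee he => (hM ee he).1) R hR0 f hf.2 (toR_zero _ hu) hs
      symm
      rw [Pm_eq_iff e hq (hWI hf)]
      exact ⟨1, fA f 0 0, fA f 0 1 / R 0, div_ne_zero hf.2 hR0, h3⟩)
    (fun y => Tm R ε (Xv y) (sv g y))
    (fun y hy => hTW y (by simpa using hy) _ (hsv y (by simpa using hy)))
    (test_cont e R ε W hWI hTW) ε hε
    (fun y _ => by simp only [huu]; exact toR_ofR ε _)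
    (fun y p => if p.1 = Fin.last t ∧ p.2 = 2 then ((ε : ℂ) * ‖cC y‖) ^ M 2 else 0)
    (by
      refine continuous_pi fun p => ?_
      split_ifs
      · exact (continuous_const.mul (Complex.continuous_ofReal.comp continuous_cC.norm)).pow _
      · exact continuous_const)
    (fun y _ => by
      simp only [hsg]
      funext p
      simp only [Pi.smul_apply, smul_eq_mul]
      split_ifs
      · rw [sv, ← mul_assoc, mul_pow _ (exp _), ← Complex.exp_nat_mul, mul_comm]
        congr 2
        ring
      · simp)
    (fun y hy hp => by
      have hyW := hTW y hy.le _ (hsv y hy.le)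
      obtain ⟨b, a, l, hb, h3⟩ := hsh _ hqW _ hyW hp.symm
      have h4 := uu_shift hg R _ _ b a hb l h3
      have h5 := sg_shift hg M w (fun ee he => (hM ee he).2) _ _ b a hb l h3
      rw [hqu, huu] at h4
      rw [hqs0, hsg, smul_zero] at h5
      have h6 : ε • xpart y = 0 := by
        rw [← toR_ofR, h4]
        funext j
        simp [toR]
      have h7 : xpart y = 0 := (smul_eq_zero.1 h6).resolve_left hε.ne'
      have h8 := cC_ne_zero hy (fun i => congrFun h7 i)
      have h9 := congrFun h5 (Fin.last t, 2)
      simp only [and_self, if_true, Pi.zero_apply] at h9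
      have h10 : (ε : ℂ) * sv g y = 0 := pow_eq_zero_iff (hM 2 h21).1.ne' |>.1 h9
      have h11 : sv g y = 0 := (mul_eq_zero.1 h10).resolve_left (by exact_mod_cast hε.ne')
      apply h8
      rw [← norm_eq_zero, ← norm_sv (g := g), h11, norm_zero])
  have hMw : ((M 2 : ℤ) : ZMod g) = w := by
    have := (hM 2 h21).2
    rw [show (2 : ZMod g) - 1 = 1 by ring, mul_one] at this
    simpa using this
  have : ch w = 1 := by
    rw [← hMw, ch_int, ← concl]
    push_cast; rfl
  exact hw (ch_inj (by rw [this, ch_zero]))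

end

end CMA

namespace CMA
open Metric

/-! ### Part 12: the regular polygon -/

section
variable {g t n : ℕ} [NeZero g]

noncomputable def rr (n : ℕ) (i : Fin (t + 1)) : ℂ := exp (2 * Real.pi * I / n) ^ (i : ℕ)

lemma rr_norm (hn : n ≠ 0) (i : Fin (t + 1)) : ‖rr n i‖ = 1 := by
  have h := Complex.isPrimitiveRoot_exp n hn
  rw [rr, norm_pow, norm_eq_one_of_pow_eq_one h.pow_eq_one hn, one_pow]

lemma q0_inj (hn : n = (t + 1) * g) : qq (g := g) (rr (t := t) n) ∈ Inj (Lab t g) := by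
  have hg0 : 0 < g := Nat.pos_of_ne_zero (NeZero.ne g)
  have hn0 : n ≠ 0 := by rw [hn]; positivity
  have h := Complex.isPrimitiveRoot_exp n hn0
  have h2 := h.pow (Nat.pos_of_ne_zero hn0) (show n = g * (t + 1) by rw [hn, mul_comm])
  rintro ⟨i, k⟩ ⟨j, l⟩ hij
  simp only [qq] at hij
  have h3 := congrArg (fun z => z ^ g) hij
  simp only [mul_pow, ch_pow_g, mul_one, rr] at h3
  rw [← pow_mul, ← pow_mul, mul_comm (i : ℕ), mul_comm (j : ℕ), pow_mul, pow_mul] at h3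
  have h4 : i = j := Fin.ext (h2.pow_inj i.2 j.2 h3)
  subst h4
  have h5 : rr n i ≠ 0 := by
    rw [← norm_ne_zero_iff, rr_norm hn0]; exact one_ne_zero
  rw [ch_inj (mul_left_cancel₀ h5 hij)]

lemma q0_pow (hn : n = (t + 1) * g) (x : Lab t g) : qq (g := g) (rr (t := t) n) x ^ n = 1 := by
  have hn0 : n ≠ 0 := by rw [hn]; have := NeZero.ne g; positivity
  have h := (Complex.isPrimitiveRoot_exp n hn0).pow_eq_one
  rw [qq, mul_pow, rr, ← pow_mul, mul_comm, mul_comm (x.1 : ℕ), pow_mul _ n, h, one_pow, mul_one]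
  conv_lhs => rw [hn]
  rw [mul_comm, pow_mul, ch_pow_g, one_pow]

lemma poly_class (hn : n = (t + 1) * g) (e : Lab t g ≃ Fin n) (f : OrdConfig n Set.univ)
    (hf : ∀ i, f.1 i ^ n + 1 = 0) : pr f = Pm e (qq (g := g) (rr (t := t) n)) := by
  classical
  have hn0 : n ≠ 0 := by rw [hn]; have := NeZero.ne g; positivity
  set q0 := qq (g := g) (rr (t := t) n) with hq0
  have hinj : Function.Injective q0 := q0_inj hn
  have hcard : Fintype.card (Lab t g) = n := by rw [Fintype.card_congr e, Fintype.card_fin]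
  set r := f.1 (e (0, 0)) with hr
  have hrn : r ^ n = -1 := by linear_combination hf (e (0, 0))
  have hr0 : r ≠ 0 := by
    intro h; rw [h, zero_pow hn0] at hrn
    exact one_ne_zero (show (1 : ℂ) = 0 by linear_combination hrn)
  have himg : Finset.univ.image q0 = Polynomial.nthRootsFinset n (1 : ℂ) := by
    apply Finset.eq_of_subset_of_card_le
    · intro z hz
      obtain ⟨x, -, rfl⟩ := Finset.mem_image.1 hz
      exact (Polynomial.mem_nthRootsFinset (Nat.pos_of_ne_zero hn0) _).2 (q0_pow hn x)
    · rw [Finset.card_image_of_injective _ hinj, Finset.card_univ, hcard]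
      rw [(Complex.isPrimitiveRoot_exp n hn0).card_nthRootsFinset]
  have hex : ∀ x, ∃ y, q0 y = f.1 (e x) / r := fun x => by
    have : f.1 (e x) / r ∈ Polynomial.nthRootsFinset n (1 : ℂ) := by
      rw [Polynomial.mem_nthRootsFinset (Nat.pos_of_ne_zero hn0), div_pow, hrn,
        show f.1 (e x) ^ n = -1 by linear_combination hf (e x)]
      norm_num
    rw [← himg, Finset.mem_image] at this
    obtain ⟨y, -, hy⟩ := this
    exact ⟨y, hy⟩
  choose τ hτ using hex
  have hτi : Function.Injective τ := fun x y hxy => by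
    have h1 := hτ x
    rw [hxy, hτ y, div_left_inj' hr0] at h1
    exact e.injective (f.2.1 h1.symm)
  have hfe : Function.Injective (f.1 ∘ e) := f.2.1.comp e.injective
  have h1 : pr f = Pm e (f.1 ∘ e) := by
    rw [Pm_of e hfe]
    congr 1
    apply Subtype.ext
    funext i
    simp
  rw [h1]
  symm
  rw [Pm_eq_iff e hinj hfe]
  refine ⟨Equiv.ofBijective τ (Finite.injective_iff_bijective.1 hτi), 0, r, hr0, fun x => ?_⟩
  rw [Equiv.ofBijective_apply, hτ]
  simp only [Function.comp]
  field_simp; ring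

lemma q0_sum (hg : 2 ≤ g) : ∑ x : Lab t g, qq (g := g) (rr (t := t) n) x = 0 := by
  have : Fact (1 < g) := ⟨hg⟩
  rw [Fintype.sum_prod_type]
  refine Finset.sum_eq_zero fun i _ => ?_
  simp only [qq, ← Finset.mul_sum]
  have := ch_sum (1 : ZMod g)
  simp only [one_mul, if_neg one_ne_zero] at this
  rw [this, mul_zero]

theorem final_aux (hn4 : 4 ≤ n) (hn : n = (t + 1) * g) (hg : 2 ≤ g)
    (h2 : (2 : ZMod g) = 0 → (0 : Fin (t + 1)) ≠ Fin.last t) (hd : t * 2 + 2 < 2 * (n - 2)) (w : ZMod g) (hw : w ≠ 0)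
    (hdiv : ∀ v : ZMod g, v ≠ 0 → ∃ M : ℕ, 0 < M ∧ (M : ZMod g) * v = w)
    (m : ℕ) (Φ : OpenPartialHomeomorph (ConfigModAff n) (Fin m → ℝ))
    (f : OrdConfig n Set.univ) (hf : ∀ i, f.1 i ^ n + 1 = 0) (hs : pr f ∈ Φ.source) : False := by
  classical
  have : Fact (1 < g) := ⟨hg⟩
  have hn0 : n ≠ 0 := by omega
  have hcard : Fintype.card (Lab t g) = n := by
    rw [Fintype.card_prod, Fintype.card_fin, ZMod.card, hn]
  let e : Lab t g ≃ Fin n := Fintype.equivFinOfCardEq hcard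
  rw [poly_class hn e f hf] at hs
  set q0 := qq (g := g) (rr (t := t) n) with hq0
  have hq0I : q0 ∈ Inj (Lab t g) := q0_inj hn
  have hq0n : ∀ x, ‖q0 x‖ = 1 := fun x => norm_eq_one_of_pow_eq_one (q0_pow hn x) hn0
  have hq00 : q0 (0, 0) = 1 := by simp [hq0, qq, rr, ch_zero]
  have hO : IsOpen (Inj (Lab t g) ∩ Pm e ⁻¹' Φ.source) :=
    (Pm_cont e).isOpen_inter_preimage isOpen_Inj Φ.open_source
  obtain ⟨δ0, hδ0, hball⟩ := Metric.isOpen_iff.1 hO q0 ⟨hq0I, hs⟩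
  obtain ⟨δ, hδ, hδδ⟩ : ∃ δ : ℝ, 0 < δ ∧ δ < δ0 := ⟨δ0 / 2, by linarith, by linarith⟩
  -- the dimension estimate
  have hm : 2 * (n - 2) ≤ m := by
    let qs : Lab t g → ℂ := Function.update q0 (0, 0) (1 + δ)
    have hqs0 : qs (0, 0) = 1 + δ := Function.update_self _ _ _
    have hqsn : ∀ x, x ≠ (0, 0) → qs x = q0 x := fun x hx => Function.update_of_ne hx _ _
    have hqsB : qs ∈ Inj (Lab t g) ∩ Pm e ⁻¹' Φ.source := by
      apply hball
      rw [mem_ball, dist_pi_lt_iff hδ0]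
      intro x
      by_cases hx : x = (0, 0)
      · rw [hx, hqs0, hq00, dist_eq_norm, add_sub_cancel_left, Complex.norm_real,
          Real.norm_of_nonneg hδ.le]
        exact hδδ
      · rw [hqsn x hx, dist_self]; exact hδ0
    have hsum : ∑ x, qs x = Fintype.card (Lab t g) * ((δ / n : ℝ) : ℂ) := by
      have h1 : ∀ x, qs x = q0 x + if x = (0, 0) then (δ : ℂ) else 0 := fun x => by
        by_cases hx : x = (0, 0)
        · rw [hx, hqs0, hq00, if_pos rfl]
        · rw [hqsn x hx, if_neg hx, add_zero]
      have hnC : (n : ℂ) ≠ 0 := by exact_mod_cast hn0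
      simp only [h1, Finset.sum_add_distrib, Finset.sum_ite_eq', Finset.mem_univ, if_true]
      rw [q0_sum hg, hcard]
      push_cast
      field_simp; ring
    have := generic_dim e m Φ qs hqsB.1 hqsB.2 (0, 0) (0, 1) (by simp) (by
      intro τ b a h
      obtain ⟨hb, h3⟩ := stab qs hqsB.1 (0, 0) (0, 1) (by simp) τ b a _ hsum h
      have hdn : δ / n ≤ δ / 4 := by
        apply div_le_div_of_nonneg_left hδ.le (by norm_num)
        exact_mod_cast hn4
      have hdn0 : 0 ≤ δ / n := by positivity
      have e0 : qs (0, 0) - ((δ / n : ℝ) : ℂ) = ((1 + δ - δ / n : ℝ) : ℂ) := by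
        rw [hqs0]; push_cast; ring
      have hpos : 0 < 1 + δ - δ / n := by linarith
      have hfix : τ (0, 0) = (0, 0) := by
        by_contra hne
        have h4 := congrArg norm (h3 (0, 0))
        rw [norm_mul, hb, one_mul, e0, Complex.norm_real, Real.norm_of_nonneg hpos.le,
          hqsn _ hne] at h4
        have h5 := norm_sub_le (q0 (τ (0, 0))) ((δ / n : ℝ) : ℂ)
        rw [hq0n, Complex.norm_real, Real.norm_of_nonneg hdn0] at h5
        linarith
      have hb1 : b = 1 := by
        have h4 := h3 (0, 0)
        rw [hfix, e0] at h4
        have h5 : ((1 + δ - δ / n : ℝ) : ℂ) ≠ 0 := by exact_mod_cast hpos.ne'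
        apply mul_right_cancel₀ h5
        rw [one_mul]; exact h4.symm
      ext1 x
      apply hqsB.1
      have h4 := h3 x
      rw [hb1, one_mul, sub_left_inj] at h4
      rw [h4]; rfl)
    rwa [hcard] at this
  -- the obstruction
  let R : Fin (t + 1) → ℂ := fun i => if i = 0 then 1 + δ else rr n i
  have hR0 : R 0 = ((1 + δ : ℝ) : ℂ) := by simp [R]
  have hRn : ∀ i, i ≠ 0 → R i = rr n i := fun i hi => if_neg hi
  have hRB : qq (g := g) R ∈ Inj (Lab t g) ∩ Pm e ⁻¹' Φ.source := by
    apply hball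
    rw [mem_ball, dist_pi_lt_iff hδ0]
    rintro ⟨i, k⟩
    simp only [hq0, qq]
    rw [dist_eq_norm, ← sub_mul, norm_mul, norm_ch, mul_one]
    by_cases hi : i = 0
    · rw [hi, hR0, show rr n (0 : Fin (t + 1)) = 1 by simp [rr]]
      push_cast
      rw [add_sub_cancel_left, Complex.norm_real, Real.norm_of_nonneg hδ.le]
      exact hδδ
    · rw [hRn i hi, sub_self, norm_zero]; exact hδ0
  refine core e hg h2 m Φ R hRB.1 (fun i hi => ?_) hRB.2 (by omega) w hw hdiv
  rw [hRn i hi, rr_norm hn0, hR0, Complex.norm_real, Real.norm_of_nonneg (by linarith)]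
  linarith

lemma mkΦ (n m : ℕ) (U : Set (ConfigModAff n)) (V : Set (Fin m → ℝ)) (hU : IsOpen U) (hV : IsOpen V)
    (p : ConfigModAff n) (hp : p ∈ U) (φ : ↥U ≃ₜ ↥V) :
    ∃ Φ : OpenPartialHomeomorph (ConfigModAff n) (Fin m → ℝ), p ∈ Φ.source := by
  let U' : TopologicalSpace.Opens (ConfigModAff n) := ⟨U, hU⟩
  let V' : TopologicalSpace.Opens (Fin m → ℝ) := ⟨V, hV⟩
  have hU' : Nonempty U' := ⟨⟨p, hp⟩⟩
  have hV' : Nonempty V' := ⟨φ ⟨p, hp⟩⟩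
  let φ' : U' ≃ₜ V' := φ
  refine ⟨((U'.openPartialHomeomorphSubtypeCoe hU').symm.trans φ'.toOpenPartialHomeomorph).trans
    (V'.openPartialHomeomorphSubtypeCoe hV'), ?_⟩
  simp [OpenPartialHomeomorph.trans_source]
  exact hp

end

end CMA

/-- For `n ≥ 4`, the orbit space `C_n(ℂ)/(ℂ⋊ℂ*) ≅ M_{0,n+1}/Σ_n` is not a topological
manifold: the class `p` of the configuration of the `n` roots of `z^n + 1` admits no open
neighborhood homeomorphic to an open subset of `ℝ^m` for any `m`. -/
theorem configModAff_not_manifold (n : ℕ) (hn : 4 ≤ n)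
    (f : OrdConfig n Set.univ) (hf : ∀ i, f.1 i ^ n + 1 = 0) :
    ¬ ∃ (U : Set (ConfigModAff n)) (m : ℕ) (V : Set (Fin m → ℝ)),
        IsOpen U ∧ Quot.mk _ (Quot.mk _ f) ∈ U ∧ IsOpen V ∧ Nonempty (↥U ≃ₜ ↥V) := by
  rintro ⟨U, m, V, hU, hp, hV, ⟨φ⟩⟩
  obtain ⟨Φ, hΦ⟩ := CMA.mkΦ n m U V hU hV _ hp φ
  by_cases h4 : n = 4
  · subst h4
    exact CMA.final_aux (g := 4) (t := 0) (by norm_num) (by norm_num) (by norm_num)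
      (fun h => absurd h (by decide)) (by norm_num) 2 (by decide)
      (fun v hv => by
        revert v
        have : ∀ v : ZMod 4, v ≠ 0 → (2 : ZMod 4) * v = 2 ∨ (1 : ZMod 4) * v = 2 := by decide
        intro v hv
        rcases this v hv with h | h
        · exact ⟨2, by norm_num, by exact_mod_cast h⟩
        · exact ⟨1, by norm_num, by exact_mod_cast h⟩) m Φ f hf hΦ
  · have hpr : n.minFac.Prime := Nat.minFac_prime (by omega)
    obtain ⟨c, hc⟩ := Nat.minFac_dvd n
    generalize n.minFac = g at hpr hc
    have : NeZero g := ⟨hpr.ne_zero⟩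
    have : Fact g.Prime := ⟨hpr⟩
    have hg2 := hpr.two_le
    obtain ⟨t, rfl⟩ : ∃ t, c = t + 1 := by
      rcases c with _ | t
      · omega
      · exact ⟨t, rfl⟩
    refine CMA.final_aux (g := g) (t := t) hn (by rw [hc, mul_comm]) hg2 ?_ ?_ 1 one_ne_zero ?_ m Φ f hf hΦ
    · intro h h0
      have ht : t = 0 := by
        have := congrArg Fin.val h0
        simpa using this.symm
      subst ht
      have hd : g ∣ 2 := (ZMod.natCast_eq_zero_iff 2 g).1 (by exact_mod_cast h)
      have := Nat.le_of_dvd (by norm_num) hd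
      omega
    · rcases Nat.lt_or_ge g 3 with h3 | h3
      · have : g = 2 := by omega
        subst this
        omega
      · have : 3 * (t + 1) ≤ n := by rw [hc]; exact Nat.mul_le_mul_right _ h3
        omega
    · intro v hv
      refine ⟨(v⁻¹).val, ?_, ?_⟩
      · rw [Nat.pos_iff_ne_zero, Ne, ZMod.val_eq_zero]
        exact inv_ne_zero hv
      · rw [ZMod.natCast_zmod_val, inv_mul_cancel₀ hv]
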